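/- Let 1/2<γ<1 and let Φ, 𝒜_0,…,𝒜_3 be smooth radiation fields on ℝ×S² with ‖Φ‖_{3,∞,γ} + Σ_α‖𝒜_α‖_{3,∞,γ} < ∞; set 𝒥_α(q,ω)=L_α(ω)·Im(Φ·conj(∂_qΦ)) and 𝐪 := ∫_{−∞}^∞∫_{S²}𝒥₀ dS dq. Define for r>0 the asymptotic gauge potential A_{α,asy}(t,rω) := (1/4π)∫_{−∞}^{∞}∫_{S²} 𝒥_α(η,σ)/(t−r⟨ω,σ⟩) dS(σ)dη · χ_in(q) − (1/(2r))·ln(⟨t+r⟩/⟨t−r⟩)·(∫_{−∞}^{q}𝒥_α(η,ω)dη)·χ_in(q) + (1/(2r))·ln(⟨t+r⟩/⟨t−r⟩)·(∫_{q}^{∞}𝒥_α(η,ω)dη)·(1−χ_in(q)) + 𝒜_α(q,ω)/r + (𝐪/(4πr))·χ_ex(q)·δ_{α0}. Suppose the asymptotic Lorenz gauge condition holds, namely for every fixed (q,ω)∈ℝ×S², ∂^α A_{α,asy}(r−q, rω) = O(r^{−2}·ln r) as r→∞ (indices raised with the Minkowski metric diag(−1,1,1,1)). Then for all (q,ω):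 ∂_q( L^α(ω)𝒜_α(q,ω) + (𝐪/4π)χ_in(q) + (𝐪/4π)χ_ex(q) ) = 0. -/

import Mathlib

noncomputable section

open Real MeasureTheory Filter
open scoped RealInnerProductSpace Topology

/-- Spatial points: `ℝ³` with the Euclidean norm. -/
abbrev Pt : Type := EuclideanSpace ℝ (Fin 3)

/-- `r = |x|`. -/
def rad (x : Pt) : ℝ := ‖x‖

/-- Japanese bracket `⟨a⟩ = (1+a²)^{1/2}`. -/
def jb (a : ℝ) : ℝ := Real.sqrt (1 + a ^ 2)

/-- `∂_t`. -/
def dT (f : ℝ → Pt → ℂ) : ℝ → Pt → ℂ := fun t x => deriv (fun s => f s x) t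

/-- `∂_i`. -/
def dX (i : Fin 3) (f : ℝ → Pt → ℂ) : ℝ → Pt → ℂ :=
  fun t x => fderiv ℝ (fun y => f t y) x (EuclideanSpace.single i 1)

/-- `∂_r = Σ (x_i/r) ∂_i`. -/
def dR (f : ℝ → Pt → ℂ) : ℝ → Pt → ℂ :=
  fun t x => ((rad x : ℝ) : ℂ)⁻¹ * ∑ i, ((x i : ℝ) : ℂ) * dX i f t x

/-- `L = ∂_t + ∂_r`. -/
def dL (f : ℝ → Pt → ℂ) : ℝ → Pt → ℂ := fun t x => dT f t x + dR f t x

/-- `L̲ = ∂_t − ∂_r`. -/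
def dLbar (f : ℝ → Pt → ℂ) : ℝ → Pt → ℂ := fun t x => dT f t x - dR f t x

/-- angular derivative `∂̸_i = ∂_i − ω_i ∂_r`. -/
def dAng (i : Fin 3) (f : ℝ → Pt → ℂ) : ℝ → Pt → ℂ :=
  fun t x => dX i f t x - ((x i / rad x : ℝ) : ℂ) * dR f t x

/-- `|∂̸ f|²`. -/
def angSq (f : ℝ → Pt → ℂ) (t : ℝ) (x : Pt) : ℝ := ∑ i, ‖dAng i f t x‖ ^ 2

/-- multiplication by `r`. -/
def rmul (f : ℝ → Pt → ℂ) : ℝ → Pt → ℂ := fun t x => ((rad x : ℝ) : ℂ) * f t x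

/-- `□ = −∂_t² + Δ`. -/
def box (f : ℝ → Pt → ℂ) : ℝ → Pt → ℂ :=
  fun t x => - dT (dT f) t x + ∑ i, dX i (dX i f) t x

/-- rotation `Ω_{ij} = x_i ∂_j − x_j ∂_i`. -/
def vrot (i j : Fin 3) (f : ℝ → Pt → ℂ) : ℝ → Pt → ℂ :=
  fun t x => ((x i : ℝ) : ℂ) * dX j f t x - ((x j : ℝ) : ℂ) * dX i f t x

/-- boost `Ω_{0i} = t ∂_i + x_i ∂_t`. -/
def vboost (i : Fin 3) (f : ℝ → Pt → ℂ) : ℝ → Pt → ℂ :=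
  fun t x => (t : ℂ) * dX i f t x + ((x i : ℝ) : ℂ) * dT f t x

/-- scaling `S = t ∂_t + r ∂_r`. -/
def vscal (f : ℝ → Pt → ℂ) : ℝ → Pt → ℂ :=
  fun t x => (t : ℂ) * dT f t x + ((rad x : ℝ) : ℂ) * dR f t x

/-- The commutator vector fields `Z`. -/
inductive VF : Type
  | time : VF
  | space : Fin 3 → VF
  | rot : Fin 3 → Fin 3 → VF
  | boost : Fin 3 → VF
  | scal : VF
  deriving DecidableEq, Fintype

/-- Action of a commutator vector field on a function. -/
def VF.app : VF → (ℝ → Pt → ℂ) → (ℝ → Pt → ℂ)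
  | time => dT
  | space i => dX i
  | rot i j => vrot i j
  | boost i => vboost i
  | scal => vscal

/-- `Z^I` for a multiindex `I` (a list of vector fields). -/
def Ziter : List VF → (ℝ → Pt → ℂ) → ℝ → Pt → ℂ
  | [], f => f
  | z :: l, f => z.app (Ziter l f)

/-- `C^∞` smoothness for a function of `(t,x)`. -/
def Smooth2 (f : ℝ → Pt → ℂ) : Prop := ContDiff ℝ (⊤ : ℕ∞) (Function.uncurry f)

/-- real-valued versions of the derivative operators -/
def dTR (f : ℝ → Pt → ℝ) : ℝ → Pt → ℝ := fun t x => deriv (fun s => f s x) t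

def dXR (i : Fin 3) (f : ℝ → Pt → ℝ) : ℝ → Pt → ℝ :=
  fun t x => fderiv ℝ (fun y => f t y) x (EuclideanSpace.single i 1)

def boxR (f : ℝ → Pt → ℝ) : ℝ → Pt → ℝ :=
  fun t x => - dTR (dTR f) t x + ∑ i, dXR i (dXR i f) t x

/-- `∂_q` acting on radiation fields `F(q,ω)`. -/
def dq (F : ℝ → Pt → ℂ) : ℝ → Pt → ℂ := fun q ω => deriv (fun s => F s ω) q

/-- `∂_{ω_i}` acting on radiation fields. -/
def dOm (i : Fin 3) (F : ℝ → Pt → ℂ) : ℝ → Pt → ℂ :=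
  fun q ω => fderiv ℝ (fun y => F q y) ω (EuclideanSpace.single i 1)

/-- angular rotation `ω_i ∂_{ω_j} − ω_j ∂_{ω_i}` on radiation fields. -/
def aRot (i j : Fin 3) (F : ℝ → Pt → ℂ) : ℝ → Pt → ℂ :=
  fun q ω => ((ω i : ℝ) : ℂ) * dOm j F q ω - ((ω j : ℝ) : ℂ) * dOm i F q ω

/-- `⟨q⟩∂_q` on radiation fields. -/
def qdq (F : ℝ → Pt → ℂ) : ℝ → Pt → ℂ := fun q ω => ((jb q : ℝ) : ℂ) * dq F q ω

/-- `q∂_q` on radiation fields. -/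
def qmdq (F : ℝ → Pt → ℂ) : ℝ → Pt → ℂ := fun q ω => (q : ℂ) * dq F q ω

/-- iterated angular derivatives `∂_ω^α` (as iterated rotations). -/
def aIter : List (Fin 3 × Fin 3) → (ℝ → Pt → ℂ) → ℝ → Pt → ℂ
  | [], F => F
  | p :: l, F => aRot p.1 p.2 (aIter l F)

/-- `‖F‖_{N,∞,γ} ≤ ε`, stated term by term: every seminorm
`sup |(⟨q⟩∂_q)^k ∂_ω^α F| ⟨q⟩^γ` with `k+|α| ≤ N` is at most `ε`. -/
def RadBound (N : ℕ) (γ ε : ℝ) (F : ℝ → Pt → ℂ) : Prop :=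
  ∀ (k : ℕ) (l : List (Fin 3 × Fin 3)), k + l.length ≤ N →
    ∀ (q : ℝ) (ω : Pt), rad ω = 1 →
      ‖(qdq^[k]) (aIter l F) q ω‖ * jb q ^ γ ≤ ε

/-- spacetime indices `α ∈ {0,1,2,3}`: `none` is the time index. -/
abbrev Ix : Type := Option (Fin 3)

/-- `L^α(ω) = (1, ω)`. -/
def Lup : Ix → Pt → ℝ
  | none => fun _ => 1
  | some i => fun ω => ω i

/-- `L_α(ω) = (−1, ω)`. -/
def Llow : Ix → Pt → ℝ
  | none => fun _ => -1
  | some i => fun ω => ω i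

/-- `∂_α`. -/
def pd : Ix → (ℝ → Pt → ℂ) → ℝ → Pt → ℂ
  | none => dT
  | some i => dX i

/-- `∂_α` (real valued). -/
def pdR : Ix → (ℝ → Pt → ℝ) → ℝ → Pt → ℝ
  | none => dTR
  | some i => dXR i

/-- the surface measure on the unit sphere `S² ⊆ ℝ³`. -/
def sphM : Measure (Metric.sphere (0 : Pt) 1) := (volume : Measure Pt).toSphere

/-- weighted `L²` norm `(∫ |g(t,x)|² w(r−t) dx)^{1/2}`. -/
def sqL2 (w : ℝ → ℝ) (g : ℝ → Pt → ℂ) (t : ℝ) : ℝ :=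
  Real.sqrt (∫ x : Pt, ‖g t x‖ ^ 2 * w (rad x - t))


/-- `𝒥_α(q,σ) = L_α(σ)·Im(Φ(q,σ)·conj(∂_qΦ(q,σ)))` -/
def Jr (Φ : ℝ → Pt → ℂ) (α : Ix) (q : ℝ) (σ : Pt) : ℝ :=
  Llow α σ * (Φ q σ * (starRingEnd ℂ) (dq Φ q σ)).im

/-- the charge `𝐪 = ∫∫ 𝒥₀ dS dq` -/
def charge (Φ : ℝ → Pt → ℂ) : ℝ :=
  ∫ q : ℝ, ∫ σ : Metric.sphere (0 : Pt) 1, Jr Φ none q σ ∂sphM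

/-- the asymptotic gauge potential `A_{α,asy}` -/
def Aasy (χin χex : ℝ → ℝ) (Φ : ℝ → Pt → ℂ) (𝒜 : Ix → ℝ → Pt → ℝ) (α : Ix) :
    ℝ → Pt → ℝ := fun t x =>
  (1 / (4 * π)) * (∫ η : ℝ, ∫ σ : Metric.sphere (0 : Pt) 1,
      Jr Φ α η σ / (t - ⟪x, (σ : Pt)⟫) ∂sphM) * χin (rad x - t)
  - (1 / (2 * rad x)) * Real.log (jb (t + rad x) / jb (t - rad x))
      * (∫ η in Set.Iic (rad x - t), Jr Φ α η ((rad x)⁻¹ • x)) * χin (rad x - t)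
  + (1 / (2 * rad x)) * Real.log (jb (t + rad x) / jb (t - rad x))
      * (∫ η in Set.Ioi (rad x - t), Jr Φ α η ((rad x)⁻¹ • x)) * (1 - χin (rad x - t))
  + 𝒜 α (rad x - t) ((rad x)⁻¹ • x) / rad x
  + (charge Φ / (4 * π * rad x)) * χex (rad x - t) * (if α = none then 1 else 0)

/-- the Minkowski divergence `∂^α A_α = −∂_t A_0 + Σ_i ∂_i A_i` -/
def divA (A : Ix → ℝ → Pt → ℝ) : ℝ → Pt → ℝ := fun t x =>
  - dTR (A none) t x + ∑ i, dXR i (A (some i)) t x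

/-- The radial projection `x ↦ x/|x|`. -/
def nrm (x : Pt) : Pt := (rad x)⁻¹ • x

/-- Its derivative. -/
def dnrm (x : Pt) : Pt →L[ℝ] Pt :=
  (‖x‖⁻¹) • ContinuousLinearMap.id ℝ Pt - ((‖x‖⁻¹) ^ 3) • (innerSL ℝ x).smulRight x

lemma dnrm_apply (x v : Pt) : dnrm x v = ‖x‖⁻¹ • v - ((‖x‖⁻¹) ^ 3 * ⟪x, v⟫) • x := by
  simp [dnrm, smul_smul]

lemma hasFDerivAt_rad {x : Pt} (hx : x ≠ 0) :
    HasFDerivAt rad (‖x‖⁻¹ • innerSL ℝ x) x := by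
  have h := (hasStrictFDerivAt_norm_sq x).hasFDerivAt.sqrt (by positivity)
  have e : rad = fun y : Pt => Real.sqrt (‖y‖ ^ 2) := by
    funext y; simp [rad, Real.sqrt_sq]
  rw [e]
  refine h.congr_fderiv ?_
  rw [Real.sqrt_sq (norm_nonneg x)]
  ext v
  simp
  ring

lemma hasFDerivAt_nrm {x : Pt} (hx : x ≠ 0) : HasFDerivAt nrm (dnrm x) x := by
  have hr := hasFDerivAt_rad hx
  have hx' : ‖x‖ ≠ 0 := norm_ne_zero_iff.mpr hx
  have hi : HasFDerivAt (fun y => (rad y)⁻¹) (-((‖x‖ ^ 2)⁻¹) • (‖x‖⁻¹ • innerSL ℝ x)) x := by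
    exact (hasDerivAt_inv (show rad x ≠ 0 from hx')).comp_hasFDerivAt x hr
  have h := hi.smul (hasFDerivAt_id x)
  refine h.congr_fderiv ?_
  ext v i
  simp [dnrm, rad]
  ring

lemma nrm_norm {x : Pt} (hx : x ≠ 0) : rad (nrm x) = 1 := by
  have hx' : ‖x‖ ≠ 0 := norm_ne_zero_iff.mpr hx
  simp [nrm, rad, norm_smul, hx']

lemma nrm_smul {r : ℝ} (hr : 0 < r) {ω : Pt} (hω : rad ω = 1) : nrm (r • ω) = ω := by
  have : ‖ω‖ = 1 := hω
  simp [nrm, rad, norm_smul, this, abs_of_pos hr, smul_smul, hr.ne']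

lemma rad_smul {r : ℝ} (hr : 0 < r) {ω : Pt} (hω : rad ω = 1) : rad (r • ω) = r := by
  have : ‖ω‖ = 1 := hω
  simp [rad, norm_smul, this, abs_of_pos hr]

lemma sum_sq_of_rad {ω : Pt} (hω : rad ω = 1) : ω 0 ^ 2 + ω 1 ^ 2 + ω 2 ^ 2 = 1 := by
  have h : ‖ω‖ ^ 2 = 1 := by rw [show ‖ω‖ = 1 from hω]; norm_num
  rw [EuclideanSpace.norm_sq_eq] at h
  simpa [Fin.sum_univ_three] using h

lemma inner_eq3 (x y : Pt) : ⟪x, y⟫ = x 0 * y 0 + x 1 * y 1 + x 2 * y 2 := by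
  simp [PiLp.inner_apply, Fin.sum_univ_three]; ring

lemma pt_eq_sum (w : Pt) : w = ∑ i, w i • EuclideanSpace.single i (1 : ℝ) := by
  ext j
  fin_cases j <;> simp [Fin.sum_univ_three]

lemma dnrm_orth {x : Pt} (hx : x ≠ 0) (v : Pt) : ⟪nrm x, dnrm x v⟫ = 0 := by
  have hx' : ‖x‖ ≠ 0 := norm_ne_zero_iff.mpr hx
  rw [dnrm_apply]
  simp [nrm, rad, inner_sub_right, inner_smul_left, inner_smul_right]
  field_simp
  ring

lemma dnrm_bound {x : Pt} (hx : x ≠ 0) (v : Pt) : ‖dnrm x v‖ ≤ 2 * ‖x‖⁻¹ * ‖v‖ := by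
  have hx' : 0 < ‖x‖ := norm_pos_iff.mpr hx
  rw [dnrm_apply]
  refine (norm_sub_le _ _).trans ?_
  rw [norm_smul, norm_smul, norm_mul]
  have h := abs_real_inner_le_norm x v
  have : ‖(‖x‖⁻¹) ^ 3‖ * ‖⟪x, v⟫‖ * ‖x‖ ≤ ‖x‖⁻¹ * ‖v‖ := by
    rw [Real.norm_of_nonneg (by positivity), Real.norm_eq_abs]
    calc (‖x‖⁻¹) ^ 3 * |⟪x, v⟫| * ‖x‖ ≤ (‖x‖⁻¹) ^ 3 * (‖x‖ * ‖v‖) * ‖x‖ := by gcongr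
      _ = _ := by field_simp
  rw [Real.norm_of_nonneg (by positivity : (0:ℝ) ≤ ‖x‖⁻¹)]
  linarith

lemma dnrm_trace {r : ℝ} (hr : 0 < r) {ω : Pt} (hω : rad ω = 1) :
    ∑ i, (dnrm (r • ω) (EuclideanSpace.single i 1)) i = 2 / r := by
  have h := sum_sq_of_rad hω
  have h1 : ‖r • ω‖ = r := rad_smul hr hω
  simp only [dnrm_apply, h1, Fin.sum_univ_three]
  simp [inner_eq3]
  field_simp
  linear_combination (-1) * h

/-- smooth coordinate of a spacetime point -/
lemma diff_radsub {p : ℝ × Pt} (hx : p.2 ≠ 0) :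
    HasFDerivAt (fun p : ℝ × Pt => rad p.2 - p.1)
      ((‖p.2‖⁻¹ • innerSL ℝ p.2).comp (ContinuousLinearMap.snd ℝ ℝ Pt)
        - ContinuousLinearMap.fst ℝ ℝ Pt) p :=
  ((hasFDerivAt_rad hx).comp p hasFDerivAt_snd).sub hasFDerivAt_fst

lemma diff_nrm {p : ℝ × Pt} (hx : p.2 ≠ 0) :
    HasFDerivAt (fun p : ℝ × Pt => nrm p.2)
      ((dnrm p.2).comp (ContinuousLinearMap.snd ℝ ℝ Pt)) p :=
  (hasFDerivAt_nrm hx).comp p hasFDerivAt_snd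

/-- divergence of uncurried families -/
def divU (B : Ix → ℝ × Pt → ℝ) (p : ℝ × Pt) : ℝ :=
  - fderiv ℝ (B none) p (1, 0) + ∑ i, fderiv ℝ (B (some i)) p (0, EuclideanSpace.single i 1)

lemma divU_add {B C : Ix → ℝ × Pt → ℝ} {p : ℝ × Pt} (hB : ∀ α, DifferentiableAt ℝ (B α) p)
    (hC : ∀ α, DifferentiableAt ℝ (C α) p) :
    divU (fun α p => B α p + C α p) p = divU B p + divU C p := by
  have : ∀ α, fderiv ℝ (fun p => B α p + C α p) p = fderiv ℝ (B α) p + fderiv ℝ (C α) p :=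
    fun α => fderiv_fun_add (hB α) (hC α)
  simp only [divU, this, add_apply, Finset.sum_add_distrib]
  ring

lemma divU_eq {B : Ix → ℝ × Pt → ℝ} {p : ℝ × Pt} {B' : Ix → (ℝ × Pt →L[ℝ] ℝ)}
    (h : ∀ α, HasFDerivAt (B α) (B' α) p) :
    divU B p = - B' none (1, 0) + ∑ i, B' (some i) (0, EuclideanSpace.single i 1) := by
  simp only [divU, (h _).fderiv]

lemma divA_eq {A : Ix → ℝ → Pt → ℝ} {t : ℝ} {x : Pt}
    (h : ∀ α, DifferentiableAt ℝ (fun p : ℝ × Pt => A α p.1 p.2) (t, x)) :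
    divA A t x = divU (fun α p => A α p.1 p.2) (t, x) := by
  have h1 : ∀ α, dTR (A α) t x = fderiv ℝ (fun p : ℝ × Pt => A α p.1 p.2) (t, x) (1, 0) := by
    intro α
    have := (h α).hasFDerivAt.comp_hasDerivAt t
      ((hasDerivAt_id t).prodMk (hasDerivAt_const t x))
    exact this.deriv
  have h2 : ∀ α i, dXR i (A α) t x
      = fderiv ℝ (fun p : ℝ × Pt => A α p.1 p.2) (t, x) (0, EuclideanSpace.single i 1) := by
    intro α i
    have h3 : HasFDerivAt (fun y : Pt => (t, y)) (ContinuousLinearMap.inr ℝ ℝ Pt) x :=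
      hasFDerivAt_prodMk_right t x
    have := (HasFDerivAt.comp (g := fun p : ℝ × Pt => A α p.1 p.2) x (h α).hasFDerivAt h3)
    unfold dXR
    have e := this.fderiv
    simp only [Function.comp_def] at e
    rw [e]; simp
  simp [divA, divU, h1, h2]

/-- `j = Im(Φ conj ∂_qΦ)` -/
def jj (Φ : ℝ → Pt → ℂ) (q : ℝ) (ω : Pt) : ℝ := (Φ q ω * (starRingEnd ℂ) (dq Φ q ω)).im

lemma Jr_eq (Φ : ℝ → Pt → ℂ) (α : Ix) (q : ℝ) (σ : Pt) : Jr Φ α q σ = Llow α σ * jj Φ q σ := rfl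

lemma Smooth2.diff {F : ℝ → Pt → ℂ} (h : Smooth2 F) (p : ℝ × Pt) :
    DifferentiableAt ℝ (Function.uncurry F) p :=
  (ContDiff.differentiable h (by simp)) p

lemma dq_eq {F : ℝ → Pt → ℂ} (h : Smooth2 F) (q : ℝ) (ω : Pt) :
    dq F q ω = fderiv ℝ (Function.uncurry F) (q, ω) (1, 0) := by
  have := (h.diff (q, ω)).hasFDerivAt.comp_hasDerivAt q
      ((hasDerivAt_id q).prodMk (hasDerivAt_const q ω))
  exact this.deriv

lemma dOm_eq {F : ℝ → Pt → ℂ} (h : Smooth2 F) (i : Fin 3) (q : ℝ) (ω : Pt) :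
    dOm i F q ω = fderiv ℝ (Function.uncurry F) (q, ω) (0, EuclideanSpace.single i 1) := by
  have h3 : HasFDerivAt (fun y : Pt => (q, y)) (ContinuousLinearMap.inr ℝ ℝ Pt) ω :=
    hasFDerivAt_prodMk_right q ω
  have := (HasFDerivAt.comp (g := Function.uncurry F) ω (h.diff (q, ω)).hasFDerivAt h3)
  unfold dOm
  have e := this.fderiv
  simp only [Function.comp_def, Function.uncurry] at e
  rw [e]; simp

lemma Smooth2.fd {F : ℝ → Pt → ℂ} (h : Smooth2 F) :
    ContDiff ℝ (⊤ : ℕ∞) (fderiv ℝ (Function.uncurry F)) :=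
  ContDiff.fderiv_right (m := (⊤ : ℕ∞)) h (by simp)

lemma smooth_dq {F : ℝ → Pt → ℂ} (h : Smooth2 F) : Smooth2 (dq F) := by
  have e : Function.uncurry (dq F) = fun p => fderiv ℝ (Function.uncurry F) p (1, 0) := by
    funext p; exact dq_eq h p.1 p.2
  unfold Smooth2
  rw [e]
  exact h.fd.clm_apply contDiff_const

lemma smooth_dOm {F : ℝ → Pt → ℂ} (h : Smooth2 F) (i : Fin 3) : Smooth2 (dOm i F) := by
  have e : Function.uncurry (dOm i F)
      = fun p => fderiv ℝ (Function.uncurry F) p (0, EuclideanSpace.single i 1) := by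
    funext p; exact dOm_eq h i p.1 p.2
  unfold Smooth2
  rw [e]
  exact h.fd.clm_apply contDiff_const

lemma dq_dOm {F : ℝ → Pt → ℂ} (h : Smooth2 F) (i : Fin 3) (q : ℝ) (ω : Pt) :
    dq (dOm i F) q ω = dOm i (dq F) q ω := by
  rw [dq_eq (smooth_dOm h i), dOm_eq (smooth_dq h)]
  have e1 : Function.uncurry (dq F) = fun p => fderiv ℝ (Function.uncurry F) p (1, 0) := by
    funext p; exact dq_eq h p.1 p.2
  have e2 : Function.uncurry (dOm i F)
      = fun p => fderiv ℝ (Function.uncurry F) p (0, EuclideanSpace.single i 1) := by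
    funext p; exact dOm_eq h i p.1 p.2
  have hd : DifferentiableAt ℝ (fderiv ℝ (Function.uncurry F)) (q, ω) :=
    (h.fd.differentiable (by simp)) _
  rw [e1, e2, fderiv_clm_apply hd (by fun_prop), fderiv_clm_apply hd (by fun_prop)]
  have hs : IsSymmSndFDerivAt ℝ (Function.uncurry F) (q, ω) :=
    (ContDiff.contDiffAt h).isSymmSndFDerivAt
      (by simp only [minSmoothness_of_isRCLikeNormedField]; exact WithTop.coe_le_coe.2 (le_top : (2 : ℕ∞) ≤ ⊤))
  simpa using hs.eq _ _

lemma dq_aRot {F : ℝ → Pt → ℂ} (h : Smooth2 F) (i j : Fin 3) (q : ℝ) (ω : Pt) :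
    dq (aRot i j F) q ω = aRot i j (dq F) q ω := by
  have hd : ∀ i, HasDerivAt (fun s => dOm i F s ω) (dq (dOm i F) q ω) q := by
    intro i
    have := ((smooth_dOm h i).diff (q, ω)).hasFDerivAt.comp_hasDerivAt q
      ((hasDerivAt_id q).prodMk (hasDerivAt_const q ω))
    exact this.differentiableAt.hasDerivAt
  have := ((hd j).const_mul ((ω i : ℝ) : ℂ)).sub ((hd i).const_mul ((ω j : ℝ) : ℂ))
  have e := this.deriv
  rw [dq_dOm h, dq_dOm h] at e
  exact e

/-- tangential derivatives are controlled by rotations -/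
lemma tang_eq {F : ℝ → Pt → ℂ} (h : Smooth2 F) (q : ℝ) {ν w : Pt} (hν : rad ν = 1)
    (hw : ⟪ν, w⟫ = 0) :
    fderiv ℝ (Function.uncurry F) (q, ν) (0, w)
      = ∑ i, ∑ j, ((ν i * w j : ℝ) : ℂ) * aRot i j F q ν := by
  have e : fderiv ℝ (Function.uncurry F) (q, ν) (0, w) = ∑ i, ((w i : ℝ) : ℂ) * dOm i F q ν := by
    simp only [dOm_eq h]
    have : ((0 : ℝ), w) = ∑ i, w i • ((0 : ℝ), EuclideanSpace.single i (1 : ℝ)) := by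
      have := pt_eq_sum w
      ext1
      · simp [Prod.fst_sum]
      · simpa [Prod.snd_sum] using this
    conv_lhs => rw [this]
    rw [map_sum]
    simp only [map_smul, Complex.real_smul]
  rw [e]
  have h1 := sum_sq_of_rad hν
  rw [inner_eq3] at hw
  have h1' : ((ν 0 : ℝ) : ℂ) ^ 2 + ((ν 1 : ℝ) : ℂ) ^ 2 + ((ν 2 : ℝ) : ℂ) ^ 2 = 1 := by
    rw [← Complex.ofReal_one, ← h1]; push_cast; ring
  have hw' : ((ν 0 : ℝ) : ℂ) * ((w 0 : ℝ) : ℂ) + ((ν 1 : ℝ) : ℂ) * ((w 1 : ℝ) : ℂ)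
    + ((ν 2 : ℝ) : ℂ) * ((w 2 : ℝ) : ℂ) = 0 := by
    rw [← Complex.ofReal_zero, ← hw]; push_cast; ring
  simp only [Fin.sum_univ_three, aRot]
  push_cast
  generalize dOm 0 F q ν = a
  generalize dOm 1 F q ν = b
  generalize dOm 2 F q ν = c
  generalize ((ν 0 : ℝ) : ℂ) = x at *
  generalize ((ν 1 : ℝ) : ℂ) = y at *
  generalize ((ν 2 : ℝ) : ℂ) = z at *
  generalize ((w 0 : ℝ) : ℂ) = u at *
  generalize ((w 1 : ℝ) : ℂ) = v at *
  generalize ((w 2 : ℝ) : ℂ) = k at *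
  linear_combination (-(u * a + v * b + k * c)) * h1' + (x * a + y * b + z * c) * hw'

lemma tang_bound {F : ℝ → Pt → ℂ} (h : Smooth2 F) (q : ℝ) {ν w : Pt} (hν : rad ν = 1)
    (hw : ⟪ν, w⟫ = 0) {K : ℝ} (hK : ∀ i j, ‖aRot i j F q ν‖ ≤ K) :
    ‖fderiv ℝ (Function.uncurry F) (q, ν) (0, w)‖ ≤ 9 * ‖w‖ * K := by
  rw [tang_eq h q hν hw]
  have hb : ∀ i j, ‖((ν i * w j : ℝ) : ℂ) * aRot i j F q ν‖ ≤ ‖w‖ * K := by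
    intro i j
    rw [norm_mul, Complex.norm_real, norm_mul]
    have h1 : ‖ν i‖ ≤ 1 := (PiLp.norm_apply_le ν i).trans hν.le
    have h2 : ‖w j‖ ≤ ‖w‖ := PiLp.norm_apply_le w j
    have h3 : ‖ν i‖ * ‖w j‖ ≤ ‖w‖ := by nlinarith [norm_nonneg (w j), norm_nonneg (ν i)]
    exact mul_le_mul h3 (hK i j) (norm_nonneg _) (norm_nonneg _)
  calc _ ≤ ∑ i : Fin 3, ∑ j : Fin 3, ‖w‖ * K :=
        norm_sum_le_of_le _ fun i _ => norm_sum_le_of_le _ fun j _ => hb i j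
    _ = _ := by simp; ring

lemma jb_ge_one (q : ℝ) : 1 ≤ jb q := by
  unfold jb
  rw [Real.one_le_sqrt]; nlinarith [sq_nonneg q]

lemma jb_sq (q : ℝ) : jb q ^ 2 = 1 + q ^ 2 := Real.sq_sqrt (by positivity)

/-- product of two weighted bounds -/
lemma prod_bound {γ M : ℝ} (hγ : 1 / 2 < γ) {q a b : ℝ} (ha : 0 ≤ a) (hb : 0 ≤ b)
    (h1 : a * jb q ^ γ ≤ M) (h2 : jb q * b * jb q ^ γ ≤ M) :
    a * b ≤ M ^ 2 * (1 + q ^ 2)⁻¹ := by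
  have hj := jb_ge_one q
  have hj0 : 0 < jb q := by linarith
  have hw : jb q ≤ jb q ^ γ * jb q ^ γ := by
    rw [← Real.rpow_add hj0]
    calc jb q = jb q ^ (1 : ℝ) := (Real.rpow_one _).symm
      _ ≤ _ := Real.rpow_le_rpow_of_exponent_le hj (by linarith)
  have hp : 0 < jb q ^ γ := by positivity
  have hM : 0 ≤ M := le_trans (by positivity) h1
  have := mul_le_mul h1 h2 (by positivity) hM
  rw [← div_eq_mul_inv, le_div_iff₀ (by positivity), ← jb_sq]
  calc a * b * jb q ^ 2 = (a * b * jb q) * jb q := by ring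
    _ ≤ (a * b * jb q) * (jb q ^ γ * jb q ^ γ) := by gcongr
    _ = a * jb q ^ γ * (jb q * b * jb q ^ γ) := by ring
    _ ≤ _ := by rw [pow_two]; exact this

section bounds
variable {γ M : ℝ} {Φ : ℝ → Pt → ℂ}

lemma rb00 (hB : RadBound 3 γ M Φ) (q : ℝ) {ω : Pt} (hω : rad ω = 1) :
    ‖Φ q ω‖ * jb q ^ γ ≤ M := by
  simpa [aIter] using hB 0 [] (by simp) q ω hω

lemma abs_jb (q : ℝ) : |jb q| = jb q := abs_of_nonneg (by linarith [jb_ge_one q])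

lemma rb10 (hB : RadBound 3 γ M Φ) (q : ℝ) {ω : Pt} (hω : rad ω = 1) :
    jb q * ‖dq Φ q ω‖ * jb q ^ γ ≤ M := by
  simpa [aIter, qdq, abs_jb] using hB 1 [] (by simp) q ω hω

lemma rb01 (hB : RadBound 3 γ M Φ) (i j : Fin 3) (q : ℝ) {ω : Pt} (hω : rad ω = 1) :
    ‖aRot i j Φ q ω‖ * jb q ^ γ ≤ M := by
  simpa [aIter] using hB 0 [(i, j)] (by simp) q ω hω

lemma rb11 (h : Smooth2 Φ) (hB : RadBound 3 γ M Φ) (i j : Fin 3) (q : ℝ) {ω : Pt} (hω : rad ω = 1) :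
    jb q * ‖aRot i j (dq Φ) q ω‖ * jb q ^ γ ≤ M := by
  have := hB 1 [(i, j)] (by simp) q ω hω
  simpa [aIter, qdq, abs_jb, dq_aRot h] using this

lemma jj_bound (hγ : 1 / 2 < γ) (hB : RadBound 3 γ M Φ) (q : ℝ) {ω : Pt} (hω : rad ω = 1) :
    |jj Φ q ω| ≤ M ^ 2 * (1 + q ^ 2)⁻¹ := by
  refine (Complex.abs_im_le_norm _).trans ?_
  rw [norm_mul, RCLike.norm_conj]
  exact prod_bound hγ (norm_nonneg _) (norm_nonneg _) (rb00 hB q hω) (rb10 hB q hω)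

lemma jj_smooth (h : Smooth2 Φ) : ContDiff ℝ (⊤ : ℕ∞) (Function.uncurry (jj Φ)) := by
  have h1 : ContDiff ℝ (⊤ : ℕ∞) (fun p : ℝ × Pt => Complex.conjCLE (Function.uncurry (dq Φ) p)) :=
    Complex.conjCLE.contDiff.comp (smooth_dq h)
  exact Complex.imCLM.contDiff.comp (ContDiff.mul h h1)

lemma jj_tang (hγ : 1 / 2 < γ) (h : Smooth2 Φ) (hB : RadBound 3 γ M Φ) (q : ℝ) {ν w : Pt}
    (hν : rad ν = 1) (hw : ⟪ν, w⟫ = 0) :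
    ‖fderiv ℝ (Function.uncurry (jj Φ)) (q, ν) (0, w)‖
      ≤ 18 * ‖w‖ * (M ^ 2 * (1 + q ^ 2)⁻¹) := by
  have h1 := (h.diff (q, ν)).hasFDerivAt
  have h2 := ((smooth_dq h).diff (q, ν)).hasFDerivAt
  have h3 := Complex.conjCLE.toContinuousLinearMap.hasFDerivAt.comp (q, ν) h2
  have h4 := Complex.imCLM.hasFDerivAt.comp (q, ν) (h1.mul h3)
  have e : fderiv ℝ (Function.uncurry (jj Φ)) (q, ν) = _ := h4.fderiv
  rw [e]
  have hj := jb_ge_one q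
  have hp : 0 < jb q ^ γ := by positivity
  have b1 := tang_bound h q hν hw (K := M / jb q ^ γ)
    (fun i j => by rw [le_div_iff₀ hp]; exact rb01 hB i j q hν)
  have b2 := tang_bound (smooth_dq h) q hν hw (K := M / jb q ^ γ / jb q)
    (fun i j => by
      rw [le_div_iff₀ (by positivity), le_div_iff₀ hp]
      have := rb11 h hB i j q hν
      linarith)
  set D1 := fderiv ℝ (Function.uncurry Φ) (q, ν) (0, w)
  set D2 := fderiv ℝ (Function.uncurry (dq Φ)) (q, ν) (0, w)
  have hM : 0 ≤ M := le_trans (by positivity) (rb00 hB q hν)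
  have c1 : ‖D1‖ * ‖dq Φ q ν‖ ≤ 9 * ‖w‖ * (M ^ 2 * (1 + q ^ 2)⁻¹) := by
    have := prod_bound hγ (a := M / jb q ^ γ) (M := M) (by positivity) (norm_nonneg _)
      (by rw [div_mul_cancel₀ _ hp.ne']) (rb10 hB q hν)
    calc _ ≤ 9 * ‖w‖ * (M / jb q ^ γ) * ‖dq Φ q ν‖ := by gcongr
      _ = 9 * ‖w‖ * (M / jb q ^ γ * ‖dq Φ q ν‖) := by ring
      _ ≤ _ := by gcongr
  have c2 : ‖Φ q ν‖ * ‖D2‖ ≤ 9 * ‖w‖ * (M ^ 2 * (1 + q ^ 2)⁻¹) := by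
    have := prod_bound hγ (b := M / jb q ^ γ / jb q) (M := M) (norm_nonneg _) (by positivity)
      (rb00 hB q hν) (by field_simp; exact le_refl _)
    calc _ ≤ ‖Φ q ν‖ * (9 * ‖w‖ * (M / jb q ^ γ / jb q)) := by gcongr
      _ = 9 * ‖w‖ * (‖Φ q ν‖ * (M / jb q ^ γ / jb q)) := by ring
      _ ≤ _ := by gcongr
  refine (Complex.abs_im_le_norm (Φ q ν * (starRingEnd ℂ) D2 + (starRingEnd ℂ) (dq Φ q ν) * D1)).trans ?_
  refine (norm_add_le _ _).trans ?_
  rw [norm_mul, norm_mul, RCLike.norm_conj, RCLike.norm_conj]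
  linarith
end bounds

section parts
variable {γ M : ℝ} {Φ : ℝ → Pt → ℂ}

lemma jj_cont_left (h : Smooth2 Φ) (ω : Pt) : Continuous (fun η => jj Φ η ω) :=
  (jj_smooth h).continuous.comp (by fun_prop : Continuous (fun η : ℝ => (η, ω)))

lemma jj_integrable (hγ : 1 / 2 < γ) (h : Smooth2 Φ) (hB : RadBound 3 γ M Φ) {ω : Pt}
    (hω : rad ω = 1) : Integrable (fun η => jj Φ η ω) := by
  refine Integrable.mono' (integrable_inv_one_add_sq.const_mul (M ^ 2))
    (jj_cont_left h ω).aestronglyMeasurable (ae_of_all _ fun η => ?_)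
  exact jj_bound hγ hB η hω

lemma int_diff (hγ : 1 / 2 < γ) (h : Smooth2 Φ) (hB : RadBound 3 γ M Φ) (S : Set ℝ) {x₀ : Pt}
    (hx : x₀ ≠ 0) : DifferentiableAt ℝ (fun x => ∫ η in S, jj Φ η (nrm x)) x₀ := by
  have hx0 : 0 < ‖x₀‖ := norm_pos_iff.mpr hx
  have hs : {x : Pt | ‖x₀‖ / 2 < ‖x‖} ∈ 𝓝 x₀ :=
    (isOpen_lt continuous_const continuous_norm).mem_nhds (show ‖x₀‖ / 2 < ‖x₀‖ by linarith)
  have hne : ∀ x ∈ {x : Pt | ‖x₀‖ / 2 < ‖x‖}, x ≠ 0 := by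
    intro x hx'
    have : ‖x₀‖ / 2 < ‖x‖ := hx'
    exact norm_pos_iff.mp (by linarith)
  let F' : Pt → ℝ → (Pt →L[ℝ] ℝ) := fun x η =>
    ((fderiv ℝ (Function.uncurry (jj Φ)) (η, nrm x)).comp (ContinuousLinearMap.inr ℝ ℝ Pt)).comp
      (dnrm x)
  have hfd : Continuous (fderiv ℝ (Function.uncurry (jj Φ))) :=
    (jj_smooth h).continuous_fderiv (by simp)
  refine (hasFDerivAt_integral_of_dominated_of_fderiv_le (F' := F')
    (bound := fun η => (72 * ‖x₀‖⁻¹ * M ^ 2) * (1 + η ^ 2)⁻¹) hs ?_ ?_ ?_ ?_ ?_ ?_).differentiableAt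
  · exact Eventually.of_forall fun x => (jj_cont_left h _).aestronglyMeasurable
  · exact (jj_integrable hγ h hB (nrm_norm hx)).integrableOn
  · have : Continuous (F' x₀) := by
      have h1 : Continuous (fun η : ℝ => fderiv ℝ (Function.uncurry (jj Φ)) (η, nrm x₀)) :=
        hfd.comp (by fun_prop)
      exact (h1.clm_comp continuous_const).clm_comp continuous_const
    exact this.aestronglyMeasurable
  · refine ae_of_all _ fun η x hx' => ?_
    have hx1 := hne x hx'
    have hx2 : ‖x₀‖ / 2 < ‖x‖ := hx'
    refine ContinuousLinearMap.opNorm_le_bound _ (by positivity) fun v => ?_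
    have := jj_tang hγ h hB η (nrm_norm hx1) (dnrm_orth hx1 v)
    have b := dnrm_bound hx1 v
    have b2 : ‖x‖⁻¹ ≤ 2 * ‖x₀‖⁻¹ := by
      rw [← div_eq_mul_inv, inv_le_comm₀ (by linarith) (by positivity), inv_div]; linarith
    have e : F' x η v = fderiv ℝ (Function.uncurry (jj Φ)) (η, nrm x) (0, dnrm x v) := by
      simp [F']
    rw [e]
    refine this.trans ?_
    calc 18 * ‖dnrm x v‖ * (M ^ 2 * (1 + η ^ 2)⁻¹)
        ≤ 18 * (2 * (2 * ‖x₀‖⁻¹) * ‖v‖) * (M ^ 2 * (1 + η ^ 2)⁻¹) := by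
          gcongr
          exact b.trans (by gcongr)
      _ = _ := by ring
  · exact (integrable_inv_one_add_sq.const_mul _).integrableOn
  · refine ae_of_all _ fun η x hx' => ?_
    have hd : HasFDerivAt (Function.uncurry (jj Φ)) _ (η, nrm x) :=
      ((jj_smooth h).differentiable (by simp) _).hasFDerivAt
    have h3 : HasFDerivAt (fun y : Pt => (η, y)) (ContinuousLinearMap.inr ℝ ℝ Pt) (nrm x) :=
      hasFDerivAt_prodMk_right η (nrm x)
    exact (HasFDerivAt.comp (nrm x) hd h3).comp x (hasFDerivAt_nrm (hne x hx'))

lemma prim_diff {h : ℝ × Pt → ℝ} (hc : Continuous h) (s₀ : ℝ) (y₀ : Pt) :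
    HasFDerivAt (fun p : ℝ × Pt => ∫ η in s₀..p.1, h (η, p.2))
      (h (s₀, y₀) • ContinuousLinearMap.fst ℝ ℝ Pt) (s₀, y₀) := by
  rw [hasFDerivAt_iff_isLittleO, Asymptotics.isLittleO_iff]
  intro c hcpos
  obtain ⟨δ, hδ, H⟩ := Metric.continuousAt_iff.mp (hc.continuousAt (x := (s₀, y₀))) c hcpos
  filter_upwards [Metric.ball_mem_nhds (s₀, y₀) hδ] with p hp
  rw [Metric.mem_ball] at hp
  have hci : Continuous (fun η : ℝ => h (η, p.2)) := hc.comp (by fun_prop)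
  have e : (∫ η in s₀..p.1, h (η, p.2)) - (∫ η in s₀..(s₀, y₀).1, h (η, (s₀, y₀).2))
      - (h (s₀, y₀) • ContinuousLinearMap.fst ℝ ℝ Pt) (p - (s₀, y₀))
      = ∫ η in s₀..p.1, (h (η, p.2) - h (s₀, y₀)) := by
    rw [intervalIntegral.integral_sub (hci.intervalIntegrable _ _) (by simp)]
    simp; ring
  rw [e]
  have hb : ‖∫ η in s₀..p.1, (h (η, p.2) - h (s₀, y₀))‖ ≤ c * |p.1 - s₀| := by
    refine intervalIntegral.norm_integral_le_of_norm_le_const fun η hη => ?_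
    have hη' : |η - s₀| ≤ |p.1 - s₀| := by
      have := Set.abs_sub_left_of_mem_uIcc (Set.uIoc_subset_uIcc hη)
      exact this
    have h1 : dist (η, p.2) (s₀, y₀) < δ := by
      refine lt_of_le_of_lt ?_ hp
      rw [Prod.dist_eq, Prod.dist_eq]
      exact max_le_max hη' le_rfl
    have := (H h1).le
    rwa [Real.dist_eq] at this
  refine hb.trans ?_
  gcongr
  exact norm_fst_le (p - (s₀, y₀))

lemma int_Iic_diff (hγ : 1 / 2 < γ) (h : Smooth2 Φ) (hB : RadBound 3 γ M Φ) {p₀ : ℝ × Pt}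
    (hx : p₀.2 ≠ 0) :
    DifferentiableAt ℝ (fun p : ℝ × Pt => ∫ η in Set.Iic (rad p.2 - p.1), jj Φ η (nrm p.2)) p₀ := by
  set s₀ := rad p₀.2 - p₀.1 with hs₀
  have d1 : DifferentiableAt ℝ (fun p : ℝ × Pt => ∫ η in Set.Iic s₀, jj Φ η (nrm p.2)) p₀ :=
    (int_diff hγ h hB (Set.Iic s₀) hx).comp p₀ differentiableAt_snd
  have d2 : DifferentiableAt ℝ
      (fun p : ℝ × Pt => ∫ η in s₀..(rad p.2 - p.1), jj Φ η (nrm p.2)) p₀ := by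
    have := (prim_diff (jj_smooth h).continuous s₀ (nrm p₀.2))
    exact DifferentiableAt.comp p₀ (f := fun p : ℝ × Pt => (rad p.2 - p.1, nrm p.2))
      this.differentiableAt
      ((diff_radsub hx).differentiableAt.prodMk (diff_nrm hx).differentiableAt)
  refine (d1.add d2).congr_of_eventuallyEq ?_
  have : ∀ᶠ p : ℝ × Pt in 𝓝 p₀, p.2 ≠ 0 :=
    (continuous_snd.continuousAt).eventually_ne hx
  filter_upwards [this] with p hp
  have hi := jj_integrable hγ h hB (nrm_norm hp)
  have := intervalIntegral.integral_Iic_sub_Iic (a := s₀) (b := rad p.2 - p.1)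
    hi.integrableOn hi.integrableOn
  simp only [Pi.add_apply]
  linarith

lemma int_Ioi_diff (hγ : 1 / 2 < γ) (h : Smooth2 Φ) (hB : RadBound 3 γ M Φ) {p₀ : ℝ × Pt}
    (hx : p₀.2 ≠ 0) :
    DifferentiableAt ℝ (fun p : ℝ × Pt => ∫ η in Set.Ioi (rad p.2 - p.1), jj Φ η (nrm p.2)) p₀ := by
  have d1 : DifferentiableAt ℝ (fun p : ℝ × Pt => ∫ η in Set.univ, jj Φ η (nrm p.2)) p₀ :=
    (int_diff hγ h hB Set.univ hx).comp p₀ differentiableAt_snd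
  refine (d1.sub (int_Iic_diff hγ h hB hx)).congr_of_eventuallyEq ?_
  have : ∀ᶠ p : ℝ × Pt in 𝓝 p₀, p.2 ≠ 0 :=
    (continuous_snd.continuousAt).eventually_ne hx
  filter_upwards [this] with p hp
  have hi := jj_integrable hγ h hB (nrm_norm hp)
  have := intervalIntegral.integral_Iic_add_Ioi (b := rad p.2 - p.1)
    hi.integrableOn hi.integrableOn
  simp only [Pi.sub_apply, setIntegral_univ]
  linarith
end parts

/-- the scalar factor of the logarithmic terms -/
def Gf (χin : ℝ → ℝ) (Φ : ℝ → Pt → ℂ) (p : ℝ × Pt) : ℝ :=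
  (1 / (2 * rad p.2)) * Real.log (jb (p.1 + rad p.2) / jb (p.1 - rad p.2)) *
    (- (∫ η in Set.Iic (rad p.2 - p.1), jj Φ η (nrm p.2)) * χin (rad p.2 - p.1)
      + (∫ η in Set.Ioi (rad p.2 - p.1), jj Φ η (nrm p.2)) * (1 - χin (rad p.2 - p.1)))

lemma jb_pos (a : ℝ) : 0 < jb a := by linarith [jb_ge_one a]

lemma jb_diff : Differentiable ℝ jb := by
  intro a
  unfold jb
  exact DifferentiableAt.sqrt (by fun_prop) (by positivity)

lemma Gf_diff {γ M : ℝ} {Φ : ℝ → Pt → ℂ} {χin : ℝ → ℝ} (hγ : 1 / 2 < γ) (h : Smooth2 Φ)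
    (hB : RadBound 3 γ M Φ)
    (hχ : ContDiff ℝ (⊤ : ℕ∞) χin) {p : ℝ × Pt} (hx : p.2 ≠ 0) :
    DifferentiableAt ℝ (Gf χin Φ) p := by
  have hr : DifferentiableAt ℝ (fun p : ℝ × Pt => rad p.2) p :=
    (hasFDerivAt_rad hx).differentiableAt.comp p differentiableAt_snd
  have hr0 : rad p.2 ≠ 0 := norm_ne_zero_iff.mpr hx
  have hχd : DifferentiableAt ℝ (fun p : ℝ × Pt => χin (rad p.2 - p.1)) p :=
    (hχ.differentiable (by simp) _).comp p (diff_radsub hx).differentiableAt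
  have h1 := int_Iic_diff hγ h hB hx
  have h2 := int_Ioi_diff hγ h hB hx
  have h3 : DifferentiableAt ℝ (fun p : ℝ × Pt => jb (p.1 + rad p.2)) p :=
    (jb_diff _).comp p (differentiableAt_fst.add hr)
  have h4 : DifferentiableAt ℝ (fun p : ℝ × Pt => jb (p.1 - rad p.2)) p :=
    (jb_diff _).comp p (differentiableAt_fst.sub hr)
  have h7 : (fun p : ℝ × Pt => jb (p.1 - rad p.2)) p ≠ 0 := (jb_pos _).ne'
  have h8 : DifferentiableAt ℝ
      (fun p : ℝ × Pt => jb (p.1 + rad p.2) / jb (p.1 - rad p.2)) p := by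
    simp only [div_eq_mul_inv]
    refine h3.fun_mul (DifferentiableAt.fun_inv h4 ?_)
    exact h7
  have h5 : DifferentiableAt ℝ
      (fun p : ℝ × Pt => Real.log (jb (p.1 + rad p.2) / jb (p.1 - rad p.2))) p :=
    DifferentiableAt.log (f := fun p : ℝ × Pt => jb (p.1 + rad p.2) / jb (p.1 - rad p.2))
      h8 (div_pos (jb_pos _) (jb_pos _)).ne'
  have h6 : DifferentiableAt ℝ (fun p : ℝ × Pt => 1 / (2 * rad p.2)) p := by
    simp only [one_div]
    refine DifferentiableAt.fun_inv (hr.const_mul 2) ?_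
    simpa using hr0
  exact (h6.mul h5).mul ((h1.neg.mul hχd).add (h2.mul ((differentiableAt_const 1).sub hχd)))

lemma smul_ne {r : ℝ} (hr : 0 < r) {ω : Pt} (hω : rad ω = 1) : r • ω ≠ 0 := by
  rw [← norm_ne_zero_iff]
  have := rad_smul hr hω
  rw [show ‖r • ω‖ = r from this]; exact hr.ne'

/-- along the outgoing light ray the bracket factor is this function -/
def psi (q ρ : ℝ) : ℝ := Real.log (jb (2 * ρ - q)) - Real.log (jb q)

lemma jb_neg (a : ℝ) : jb (-a) = jb a := by simp [jb]

lemma log_jb (a : ℝ) : Real.log (jb a) = Real.log (1 + a ^ 2) / 2 := by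
  unfold jb; exact Real.log_sqrt (by positivity)

lemma psi_deriv (q ρ : ℝ) :
    HasDerivAt (psi q) (2 * (2 * ρ - q) / (1 + (2 * ρ - q) ^ 2)) ρ := by
  have e : psi q = fun ρ => Real.log (1 + (2 * ρ - q) ^ 2) / 2 - Real.log (jb q) := by
    funext ρ; simp [psi, log_jb]
  rw [e]
  have h1 : HasDerivAt (fun ρ : ℝ => 2 * ρ - q) 2 ρ := by
    simpa using ((hasDerivAt_id ρ).const_mul 2).sub_const q
  have h2 := ((h1.pow 2).const_add 1)
  have h3 := ((HasDerivAt.log h2 (by simp; positivity)).div_const 2).sub_const (Real.log (jb q))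
  refine h3.congr_deriv ?_
  simp
  ring

lemma tendsto_lin (q : ℝ) : Tendsto (fun r : ℝ => 2 * r - q) atTop atTop :=
  tendsto_atTop_add_const_right _ (-q) (tendsto_id.const_mul_atTop (by norm_num : (0:ℝ) < 2))

lemma jb_tendsto (q : ℝ) : Tendsto (fun r : ℝ => jb (2 * r - q)) atTop atTop := by
  refine tendsto_atTop_mono (fun r => ?_) (tendsto_lin q)
  unfold jb
  exact Real.le_sqrt_of_sq_le (by linarith)

lemma psi'_tendsto (q : ℝ) :
    Tendsto (fun r : ℝ => 2 * (2 * r - q) / (1 + (2 * r - q) ^ 2)) atTop (𝓝 0) := by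
  have h := (tendsto_inv_atTop_zero.comp (tendsto_lin q)).const_mul 2
  rw [mul_zero] at h
  refine squeeze_zero' ?_ ?_ h
  · filter_upwards [(tendsto_lin q).eventually_gt_atTop 0] with r hr
    positivity
  · filter_upwards [(tendsto_lin q).eventually_gt_atTop 0] with r hr
    simp only [Function.comp]
    rw [div_le_iff₀ (by positivity)]
    field_simp
    nlinarith

lemma psi_tendsto (q : ℝ) : Tendsto (fun r : ℝ => psi q r / r) atTop (𝓝 0) := by
  have h0 : Tendsto (fun x : ℝ => Real.log x / x) atTop (𝓝 0) :=
    Real.isLittleO_log_id_atTop.tendsto_div_nhds_zero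
  have h1 := (h0.comp (jb_tendsto q)).const_mul 4
  rw [mul_zero] at h1
  have h2 : Tendsto (fun r : ℝ => Real.log (jb (2 * r - q)) / r) atTop (𝓝 0) := by
    refine squeeze_zero' ?_ ?_ h1
    · filter_upwards [eventually_gt_atTop 0] with r hr
      exact div_nonneg (Real.log_nonneg (jb_ge_one _)) hr.le
    · filter_upwards [eventually_ge_atTop (1 + |q|)] with r hr
      have hq := abs_nonneg q
      have hr0 : 0 < r := by linarith
      have hl := Real.log_nonneg (jb_ge_one (2 * r - q))
      have hj : jb (2 * r - q) ≤ 4 * r := by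
        unfold jb
        rw [Real.sqrt_le_left (by positivity)]
        have := neg_abs_le q
        have := le_abs_self q
        nlinarith
      simp only [Function.comp]
      have hjp := jb_pos (2 * r - q)
      rw [← mul_div_assoc, div_le_div_iff₀ hr0 hjp]
      nlinarith
  have h3 : Tendsto (fun r : ℝ => Real.log (jb q) / r) atTop (𝓝 0) :=
    tendsto_const_nhds.div_atTop tendsto_id
  have := h2.sub h3
  rw [sub_zero] at this
  refine this.congr fun r => ?_
  simp [psi]; ring

/-- value of the constant along the ray -/
def gc (χin : ℝ → ℝ) (Φ : ℝ → Pt → ℂ) (q : ℝ) (ω : Pt) : ℝ :=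
  - (∫ η in Set.Iic q, jj Φ η ω) * χin q + (∫ η in Set.Ioi q, jj Φ η ω) * (1 - χin q)

lemma Gf_ray (χin : ℝ → ℝ) (Φ : ℝ → Pt → ℂ) (q : ℝ) {ω : Pt} (hω : rad ω = 1) {ρ : ℝ} (hρ : 0 < ρ) :
    Gf χin Φ (ρ - q, ρ • ω) = (psi q ρ / (2 * ρ)) * gc χin Φ q ω := by
  have e1 : ρ - (ρ - q) = q := by ring
  have e2 : ρ - q + ρ = 2 * ρ - q := by ring
  have e3 : ρ - q - ρ = - q := by ring
  simp only [Gf, rad_smul hρ hω, nrm_smul hρ hω, e1, e2, e3, jb_neg]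
  rw [Real.log_div (jb_pos _).ne' (jb_pos _).ne']
  simp only [gc, psi]
  ring

/-- the logarithmic part -/
def B2 (χin : ℝ → ℝ) (Φ : ℝ → Pt → ℂ) (α : Ix) (p : ℝ × Pt) : ℝ :=
  Llow α (nrm p.2) * Gf χin Φ p

lemma dir_sum (T : ℝ × Pt →L[ℝ] ℝ) (ω : Pt) :
    T (1, ω) = T (1, 0) + ∑ i, ω i * T (0, EuclideanSpace.single i 1) := by
  have h1 : ((1 : ℝ), ω) = (1, 0) + (0, ω) := by simp
  have h2 : ((0 : ℝ), ω) = ∑ i, ω i • ((0 : ℝ), EuclideanSpace.single i (1 : ℝ)) := by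
    have := pt_eq_sum ω
    ext1
    · simp [Prod.fst_sum]
    · simpa [Prod.snd_sum] using this
  rw [h1, map_add, h2, map_sum]
  simp only [map_smul, smul_eq_mul]

lemma nrm_comp_deriv {p : ℝ × Pt} (hx : p.2 ≠ 0) (i : Fin 3) :
    HasFDerivAt (fun p : ℝ × Pt => nrm p.2 i)
      ((EuclideanSpace.proj i : Pt →L[ℝ] ℝ).comp
        ((dnrm p.2).comp (ContinuousLinearMap.snd ℝ ℝ Pt))) p :=
  (EuclideanSpace.proj i : Pt →L[ℝ] ℝ).hasFDerivAt.comp p (diff_nrm hx)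

section B2
variable {γ M : ℝ} {Φ : ℝ → Pt → ℂ} {χin : ℝ → ℝ}

lemma B2_hasD (hγ : 1 / 2 < γ) (h : Smooth2 Φ) (hB : RadBound 3 γ M Φ)
    (hχ : ContDiff ℝ (⊤ : ℕ∞) χin) {p : ℝ × Pt} (hx : p.2 ≠ 0) (α : Ix) :
    DifferentiableAt ℝ (B2 χin Φ α) p := by
  have hG := Gf_diff hγ h hB hχ hx
  cases α with
  | none => exact (differentiableAt_const (-1 : ℝ)).mul hG
  | some i => exact (nrm_comp_deriv hx i).differentiableAt.mul hG

lemma B2_div (hγ : 1 / 2 < γ) (h : Smooth2 Φ) (hB : RadBound 3 γ M Φ)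
    (hχ : ContDiff ℝ (⊤ : ℕ∞) χin) (q : ℝ) {ω : Pt} (hω : rad ω = 1) {r : ℝ} (hr : 0 < r) :
    r * divU (B2 χin Φ) (r - q, r • ω)
      = gc χin Φ q ω * ((2 * (2 * r - q) / (1 + (2 * r - q) ^ 2)) / 2 + psi q r / r / 2) := by
  have hx : ((r - q, r • ω) : ℝ × Pt).2 ≠ 0 := smul_ne hr hω
  have hG := (Gf_diff hγ h hB hχ hx).hasFDerivAt
  set DG := fderiv ℝ (Gf χin Φ) (r - q, r • ω)
  have hn : fderiv ℝ (B2 χin Φ none) (r - q, r • ω) = - DG := by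
    have : HasFDerivAt (B2 χin Φ none) _ (r - q, r • ω) := hG.const_mul (-1 : ℝ)
    rw [this.fderiv]; simp
  have hs : ∀ i, fderiv ℝ (B2 χin Φ (some i)) (r - q, r • ω) (0, EuclideanSpace.single i 1)
      = ω i * DG (0, EuclideanSpace.single i 1)
        + Gf χin Φ (r - q, r • ω) * (dnrm (r • ω) (EuclideanSpace.single i 1)) i := by
    intro i
    have : HasFDerivAt (B2 χin Φ (some i)) _ (r - q, r • ω) := (nrm_comp_deriv hx i).mul hG
    rw [this.fderiv]
    simp [nrm_smul hr hω]
  have hray : DG (1, ω) = deriv (fun ρ => (psi q ρ / (2 * ρ)) * gc χin Φ q ω) r := by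
    have hl : HasDerivAt (fun ρ : ℝ => ((ρ - q, ρ • ω) : ℝ × Pt)) (1, ω) r := by
      have h1 : HasDerivAt (fun ρ : ℝ => ρ • ω) ((1 : ℝ) • ω) r := (hasDerivAt_id r).smul_const ω
      rw [one_smul] at h1
      exact ((hasDerivAt_id r).sub_const q).prodMk h1
    have h2 := hG.comp_hasDerivAt r hl
    rw [← h2.deriv]
    refine Filter.EventuallyEq.deriv_eq ?_
    filter_upwards [eventually_gt_nhds hr] with ρ hρ
    exact Gf_ray χin Φ q hω hρ
  have hφ : HasDerivAt (fun ρ => (psi q ρ / (2 * ρ)) * gc χin Φ q ω) _ r :=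
    ((psi_deriv q r).div ((hasDerivAt_id r).const_mul 2) (by simpa using hr.ne')).mul_const _
  rw [hφ.deriv, dir_sum] at hray
  unfold divU
  rw [hn]
  simp only [hs, Finset.sum_add_distrib, ← Finset.mul_sum, dnrm_trace hr hω, Gf_ray χin Φ q hω hr]
  simp only [neg_apply, neg_neg, ← add_assoc]
  rw [hray]
  simp only [id]
  have : (1 + (2 * r - q) ^ 2) ≠ 0 := by positivity
  field_simp
  ring

lemma B2_lim (hγ : 1 / 2 < γ) (h : Smooth2 Φ) (hB : RadBound 3 γ M Φ)
    (hχ : ContDiff ℝ (⊤ : ℕ∞) χin) (q : ℝ) {ω : Pt} (hω : rad ω = 1) :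
    Tendsto (fun r : ℝ => r * divU (B2 χin Φ) (r - q, r • ω)) atTop (𝓝 0) := by
  have := (((psi'_tendsto q).div_const 2).add ((psi_tendsto q).div_const 2)).const_mul (gc χin Φ q ω)
  simp only [zero_div, add_zero, mul_zero] at this
  refine this.congr' ?_
  filter_upwards [eventually_gt_atTop 0] with r hr
  exact (B2_div hγ h hB hχ q hω hr).symm
end B2

/-- derivative of the map `(t,x) ↦ |x|⁻¹` -/
lemma inv_rad_deriv {p : ℝ × Pt} (hx : p.2 ≠ 0) :
    HasFDerivAt (fun p : ℝ × Pt => (rad p.2)⁻¹)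
      ((-((‖p.2‖ ^ 2)⁻¹) • (‖p.2‖⁻¹ • innerSL ℝ p.2)).comp (ContinuousLinearMap.snd ℝ ℝ Pt)) p := by
  have hx' : ‖p.2‖ ≠ 0 := norm_ne_zero_iff.mpr hx
  have hi : HasFDerivAt (fun y => (rad y)⁻¹) (-((‖p.2‖ ^ 2)⁻¹) • (‖p.2‖⁻¹ • innerSL ℝ p.2)) p.2 :=
    (hasDerivAt_inv (show rad p.2 ≠ 0 from hx')).comp_hasFDerivAt p.2 (hasFDerivAt_rad hx)
  exact hi.comp p hasFDerivAt_snd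

/-- the radiation field part -/
def B3 (𝒜 : Ix → ℝ → Pt → ℝ) (α : Ix) (p : ℝ × Pt) : ℝ :=
  𝒜 α (rad p.2 - p.1) (nrm p.2) / rad p.2

lemma A_smooth {𝒜 : Ix → ℝ → Pt → ℝ} (h : ∀ α, Smooth2 (fun q ω => ((𝒜 α q ω : ℝ) : ℂ))) (α : Ix) :
    ContDiff ℝ (⊤ : ℕ∞) (Function.uncurry (𝒜 α)) :=
  Complex.reCLM.contDiff.comp (h α)

lemma B3_hasD {𝒜 : Ix → ℝ → Pt → ℝ} (h : ∀ α, Smooth2 (fun q ω => ((𝒜 α q ω : ℝ) : ℂ)))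
    {p : ℝ × Pt} (hx : p.2 ≠ 0) (α : Ix) :
    HasFDerivAt (B3 𝒜 α)
      ((𝒜 α (rad p.2 - p.1) (nrm p.2)) •
        ((-((‖p.2‖ ^ 2)⁻¹) • (‖p.2‖⁻¹ • innerSL ℝ p.2)).comp (ContinuousLinearMap.snd ℝ ℝ Pt))
        + (rad p.2)⁻¹ • (fderiv ℝ (Function.uncurry (𝒜 α)) (rad p.2 - p.1, nrm p.2)).comp
          (((‖p.2‖⁻¹ • innerSL ℝ p.2).comp (ContinuousLinearMap.snd ℝ ℝ Pt)
        - ContinuousLinearMap.fst ℝ ℝ Pt).prod ((dnrm p.2).comp (ContinuousLinearMap.snd ℝ ℝ Pt)))) p := by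
  have h1 : HasFDerivAt (Function.uncurry (𝒜 α)) _ (rad p.2 - p.1, nrm p.2) :=
    ((A_smooth h α).differentiable (by simp) _).hasFDerivAt
  have h2 := HasFDerivAt.comp (f := fun p : ℝ × Pt => (rad p.2 - p.1, nrm p.2)) p h1
    ((diff_radsub hx).prodMk (diff_nrm hx))
  have h3 := h2.mul (inv_rad_deriv hx)
  exact h3

lemma A_deriv {𝒜 : Ix → ℝ → Pt → ℝ} (h : ∀ α, Smooth2 (fun q ω => ((𝒜 α q ω : ℝ) : ℂ))) (α : Ix)
    (q : ℝ) (ω : Pt) : HasDerivAt (fun s => 𝒜 α s ω)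
      (fderiv ℝ (Function.uncurry (𝒜 α)) (q, ω) (1, 0)) q := by
  have h1 : HasFDerivAt (Function.uncurry (𝒜 α)) _ (q, ω) :=
    ((A_smooth h α).differentiable (by simp) _).hasFDerivAt
  exact h1.comp_hasDerivAt q ((hasDerivAt_id q).prodMk (hasDerivAt_const q ω))

lemma B3_lim {𝒜 : Ix → ℝ → Pt → ℝ} (h : ∀ α, Smooth2 (fun q ω => ((𝒜 α q ω : ℝ) : ℂ)))
    (q : ℝ) {ω : Pt} (hω : rad ω = 1) :
    Tendsto (fun r : ℝ => r * divU (B3 𝒜) (r - q, r • ω)) atTop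
      (𝓝 (deriv (fun s => 𝒜 none s ω) q + ∑ i, ω i * deriv (fun s => 𝒜 (some i) s ω) q)) := by
  set D : Ix → (ℝ × Pt →L[ℝ] ℝ) := fun α => fderiv ℝ (Function.uncurry (𝒜 α)) (q, ω) with hD
  have hd : ∀ α, deriv (fun s => 𝒜 α s ω) q = D α (1, 0) := fun α => (A_deriv h α q ω).deriv
  simp only [hd]
  set K : ℝ := ∑ i, (D (some i) (0, EuclideanSpace.single i 1 - ω i • ω) - 𝒜 (some i) q ω * ω i)
  have h1 : Tendsto (fun r : ℝ => (D none (1, 0) + ∑ i, ω i * D (some i) (1, 0)) + K / r) atTop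
      (𝓝 ((D none (1, 0) + ∑ i, ω i * D (some i) (1, 0)) + 0)) :=
    tendsto_const_nhds.add (tendsto_const_nhds.div_atTop tendsto_id)
  rw [add_zero] at h1
  refine h1.congr' ?_
  filter_upwards [eventually_gt_atTop 0] with r hr
  have hx : ((r - q, r • ω) : ℝ × Pt).2 ≠ 0 := smul_ne hr hω
  have hn : ‖r • ω‖ = r := rad_smul hr hω
  have hn1 : ‖ω‖ = 1 := hω
  have e1 : r - (r - q) = q := by ring
  rw [divU_eq (fun α => B3_hasD h hx α)]
  simp only [rad_smul hr hω, nrm_smul hr hω, e1, hn]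
  have hdn : ∀ i, dnrm (r • ω) (EuclideanSpace.single i 1)
      = r⁻¹ • (EuclideanSpace.single i 1 - ω i • ω) := by
    intro i
    rw [dnrm_apply, hn, smul_sub, smul_smul, smul_smul]
    congr 2
    simp [inner_smul_left, EuclideanSpace.inner_single_right]
    field_simp
  have hsplit : ∀ i (a b : ℝ) (w : Pt), D (some i) (a, b • w) = a * D (some i) (1, 0) + b * D (some i) (0, w) := by
    intro i a b w
    have : ((a, b • w) : ℝ × Pt) = a • ((1 : ℝ), (0 : Pt)) + b • ((0 : ℝ), w) := by simp
    rw [this, map_add, map_smul, map_smul, smul_eq_mul, smul_eq_mul]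
  have hneg : D none (-1, 0) = - D none (1, 0) := by
    rw [← map_neg]; simp
  simp only [add_apply, smul_apply, ContinuousLinearMap.comp_apply, ContinuousLinearMap.coe_snd',
    ContinuousLinearMap.prod_apply, sub_apply, ContinuousLinearMap.coe_fst', hdn, map_zero,
    zero_sub, smul_eq_mul, mul_zero, zero_add, sub_zero]
  change _ = r * (-(r⁻¹ * D none (-1, 0)) + ∑ i, (𝒜 (some i) q ω * _ + r⁻¹ * D (some i) _))
  have hin : ∀ i, (innerSL ℝ (r • ω)) (EuclideanSpace.single i 1) = r * ω i := by
    intro i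
    simp [inner_smul_left, EuclideanSpace.inner_single_right]
  simp only [hsplit, hneg, hin, K, Fin.sum_univ_three]
  field_simp
  ring

/-- the charge part -/
def B4 (χex : ℝ → ℝ) (c : ℝ) (α : Ix) (p : ℝ × Pt) : ℝ :=
  (c / (4 * π * rad p.2)) * χex (rad p.2 - p.1) * (if α = none then 1 else 0)

lemma B4_hasD {χex : ℝ → ℝ} (hχ : ContDiff ℝ (⊤ : ℕ∞) χex) (c : ℝ) {p : ℝ × Pt} (hx : p.2 ≠ 0) :
    HasFDerivAt (B4 χex c none)
      ((c / (4 * π)) • ((rad p.2)⁻¹ • (deriv χex (rad p.2 - p.1) •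
          ((‖p.2‖⁻¹ • innerSL ℝ p.2).comp (ContinuousLinearMap.snd ℝ ℝ Pt)
            - ContinuousLinearMap.fst ℝ ℝ Pt))
        + χex (rad p.2 - p.1) •
        ((-((‖p.2‖ ^ 2)⁻¹) • (‖p.2‖⁻¹ • innerSL ℝ p.2)).comp (ContinuousLinearMap.snd ℝ ℝ Pt)))) p := by
  have h1 : HasDerivAt χex (deriv χex (rad p.2 - p.1)) (rad p.2 - p.1) :=
    (hχ.differentiable (by simp) _).hasDerivAt
  have h2 := h1.comp_hasFDerivAt p (diff_radsub hx)
  have h3 := ((inv_rad_deriv hx).mul h2).const_mul (c / (4 * π))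
  have e : B4 χex c none = fun p => c / (4 * π) * ((rad p.2)⁻¹ * χex (rad p.2 - p.1)) := by
    funext p
    simp [B4]; ring
  rw [e]
  exact h3

lemma B4_diff {χex : ℝ → ℝ} (hχ : ContDiff ℝ (⊤ : ℕ∞) χex) (c : ℝ) {p : ℝ × Pt} (hx : p.2 ≠ 0)
    (α : Ix) : DifferentiableAt ℝ (B4 χex c α) p := by
  cases α with
  | none => exact (B4_hasD hχ c hx).differentiableAt
  | some i =>
    have : B4 χex c (some i) = fun _ => 0 := by funext p; simp [B4]
    rw [this]; exact differentiableAt_const _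

lemma B4_lim {χex : ℝ → ℝ} (hχ : ContDiff ℝ (⊤ : ℕ∞) χex) (c : ℝ)
    (q : ℝ) {ω : Pt} (hω : rad ω = 1) :
    Tendsto (fun r : ℝ => r * divU (B4 χex c) (r - q, r • ω)) atTop
      (𝓝 (c / (4 * π) * deriv χex q)) := by
  refine tendsto_const_nhds.congr' ?_
  filter_upwards [eventually_gt_atTop 0] with r hr
  have hx : ((r - q, r • ω) : ℝ × Pt).2 ≠ 0 := smul_ne hr hω
  have e1 : r - (r - q) = q := by ring
  have hs : ∀ i, B4 χex c (some i) = fun _ => 0 := by intro i; funext p; simp [B4]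
  unfold divU
  rw [(B4_hasD hχ c hx).fderiv]
  simp only [hs]
  simp [rad_smul hr hω, e1]
  field_simp

instance : IsFiniteMeasure sphM := by unfold sphM; infer_instance

/-- the unit sphere -/
abbrev Sph : Type := Metric.sphere (0 : Pt) 1

/-- product measure on `ℝ × S²` -/
def mu : Measure (ℝ × Sph) := (volume : Measure ℝ).prod sphM

lemma sph_rad (σ : Sph) : rad (σ : Pt) = 1 := by
  simp [rad]

open scoped Pointwise in
lemma sphM_singleton (ω : Sph) : sphM {ω} = 0 := by
  unfold sphM
  rw [Measure.toSphere_apply' _ (measurableSet_singleton ω)]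
  have : (volume : Measure Pt) (Set.Ioo (0:ℝ) 1 • (Set.image Subtype.val ({ω} : Set Sph))) = 0 := by
    refine measure_mono_null (t := (Submodule.span ℝ {(ω : Pt)} : Set Pt)) ?_ ?_
    · rintro x ⟨a, _, b, hb, rfl⟩
      simp only [Set.image_singleton, Set.mem_singleton_iff] at hb
      subst hb
      exact Submodule.smul_mem _ _ (Submodule.mem_span_singleton_self _)
    · refine Measure.addHaar_submodule _ _ ?_
      intro htop
      have h1 : Module.finrank ℝ (Submodule.span ℝ {(ω : Pt)}) ≤ 1 := by
        simpa using finrank_span_le_card (R := ℝ) ({(ω : Pt)} : Set Pt)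
      rw [htop, finrank_top] at h1
      simp at h1
  rw [this, mul_zero]

lemma ae_ne (ω : Sph) : ∀ᵐ z ∂mu, z.2 ≠ ω := by
  have h : ∀ᵐ σ ∂sphM, σ ≠ ω := by
    rw [ae_iff]; simpa using sphM_singleton ω
  exact (Measure.quasiMeasurePreserving_snd (μ := (volume : Measure ℝ)) (ν := sphM)).ae h

lemma Llow_abs (α : Ix) {σ : Pt} (hσ : rad σ = 1) : |Llow α σ| ≤ 1 := by
  cases α with
  | none => simp [Llow]
  | some i => exact (PiLp.norm_apply_le σ i).trans hσ.le

lemma Llow_cont (α : Ix) : Continuous (Llow α) := by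
  cases α with
  | none => exact continuous_const
  | some i =>
    change Continuous (fun ω : Pt => ω i)
    fun_prop

section S
variable {γ M : ℝ} {Φ : ℝ → Pt → ℂ}

lemma jz_cont (h : Smooth2 Φ) : Continuous (fun z : ℝ × Sph => jj Φ z.1 z.2) :=
  (jj_smooth h).continuous.comp
    (by fun_prop : Continuous (fun z : ℝ × Sph => ((z.1, (z.2 : Pt)) : ℝ × Pt)))

lemma jz_int (hγ : 1 / 2 < γ) (h : Smooth2 Φ) (hB : RadBound 3 γ M Φ) :
    Integrable (fun z : ℝ × Sph => jj Φ z.1 z.2) mu := by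
  have h1 : Integrable (fun z : ℝ × Sph => M ^ 2 * (1 + z.1 ^ 2)⁻¹) mu :=
    (integrable_inv_one_add_sq.const_mul (M ^ 2)).comp_fst sphM
  exact h1.mono' (jz_cont h).aestronglyMeasurable
    (ae_of_all _ fun z => jj_bound hγ hB z.1 (sph_rad z.2))

/-- the integrand on the product -/
def kern (Φ : ℝ → Pt → ℂ) (α : Ix) (p : ℝ × Pt) (z : ℝ × Sph) : ℝ :=
  Jr Φ α z.1 z.2 / (p.1 - ⟪p.2, (z.2 : Pt)⟫)

/-- the retarded integral -/
def Sf (Φ : ℝ → Pt → ℂ) (α : Ix) (p : ℝ × Pt) : ℝ :=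
  ∫ η : ℝ, ∫ σ : Sph, Jr Φ α η σ / (p.1 - ⟪p.2, (σ : Pt)⟫) ∂sphM

lemma inner_sph_le (x : Pt) (σ : Sph) : ⟪x, (σ : Pt)⟫ ≤ ‖x‖ := by
  have := real_inner_le_norm x (σ : Pt)
  rwa [show ‖(σ : Pt)‖ = 1 from sph_rad σ, mul_one] at this

lemma kern_cont (h : Smooth2 Φ) (α : Ix) {p : ℝ × Pt} (hp : ‖p.2‖ < p.1) :
    Continuous (kern Φ α p) := by
  have h1 : Continuous (fun z : ℝ × Sph => Jr Φ α z.1 z.2) :=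
    ((Llow_cont α).comp (by fun_prop : Continuous (fun z : ℝ × Sph => (z.2 : Pt)))).mul (jz_cont h)
  refine h1.div (by fun_prop) fun z => ?_
  have := inner_sph_le p.2 z.2
  linarith

lemma Jr_abs (α : Ix) (η : ℝ) (σ : Sph) : |Jr Φ α η σ| ≤ |jj Φ η σ| := by
  rw [Jr_eq, abs_mul]
  exact mul_le_of_le_one_left (abs_nonneg _) (Llow_abs α (sph_rad σ))

lemma kern_int (hγ : 1 / 2 < γ) (h : Smooth2 Φ) (hB : RadBound 3 γ M Φ) (α : Ix) {p : ℝ × Pt}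
    (hp : ‖p.2‖ < p.1) : Integrable (kern Φ α p) mu := by
  refine ((jz_int hγ h hB).abs.mul_const ((p.1 - ‖p.2‖)⁻¹)).mono'
    (kern_cont h α hp).aestronglyMeasurable (ae_of_all _ fun z => ?_)
  have h1 := inner_sph_le p.2 z.2
  have h2 : 0 < p.1 - ‖p.2‖ := by linarith
  rw [kern, norm_div, Real.norm_eq_abs, Real.norm_of_nonneg (by linarith), div_eq_mul_inv]
  exact mul_le_mul (Jr_abs α z.1 z.2) (inv_anti₀ h2 (by linarith))
    (inv_nonneg.2 (by linarith)) (abs_nonneg _)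

lemma Sf_eq (hγ : 1 / 2 < γ) (h : Smooth2 Φ) (hB : RadBound 3 γ M Φ) (α : Ix) {p : ℝ × Pt}
    (hp : ‖p.2‖ < p.1) : Sf Φ α p = ∫ z, kern Φ α p z ∂mu :=
  (integral_prod (kern Φ α p) (kern_int hγ h hB α hp)).symm

lemma charge_eq (hγ : 1 / 2 < γ) (h : Smooth2 Φ) (hB : RadBound 3 γ M Φ) :
    charge Φ = ∫ z : ℝ × Sph, - jj Φ z.1 z.2 ∂mu := by
  have := integral_prod (fun z : ℝ × Sph => - jj Φ z.1 z.2) (jz_int hγ h hB).neg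
  refine Eq.trans ?_ this.symm
  simp [charge, Jr_eq, Llow]

/-- the linear form `v ↦ v.1 - ⟨σ, v.2⟩` -/
def lin (σ : Pt) : ℝ × Pt →L[ℝ] ℝ :=
  ContinuousLinearMap.fst ℝ ℝ Pt - (innerSL ℝ σ).comp (ContinuousLinearMap.snd ℝ ℝ Pt)

lemma lin_apply (σ : Pt) (v : ℝ × Pt) : lin σ v = v.1 - ⟪σ, v.2⟫ := by simp [lin]

/-- derivative of the kernel -/
def kern' (Φ : ℝ → Pt → ℂ) (α : Ix) (p : ℝ × Pt) (z : ℝ × Sph) : ℝ × Pt →L[ℝ] ℝ :=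
  (-(Jr Φ α z.1 z.2) * ((p.1 - ⟪p.2, (z.2 : Pt)⟫) ^ 2)⁻¹) • lin z.2

lemma kern_hasD (α : Ix) {p : ℝ × Pt} (hp : ‖p.2‖ < p.1) (z : ℝ × Sph) :
    HasFDerivAt (fun p => kern Φ α p z) (kern' Φ α p z) p := by
  have h1 : HasFDerivAt (fun p : ℝ × Pt => p.1 - ⟪p.2, (z.2 : Pt)⟫) (lin z.2) p := by
    have e : (fun p : ℝ × Pt => p.1 - ⟪p.2, (z.2 : Pt)⟫) = lin z.2 := by
      funext p; rw [lin_apply, real_inner_comm]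
    rw [e]; exact (lin z.2).hasFDerivAt
  have h2 := inner_sph_le p.2 z.2
  have h3 : p.1 - ⟪p.2, (z.2 : Pt)⟫ ≠ 0 := by linarith
  have h4 := ((hasDerivAt_inv h3).comp_hasFDerivAt p h1).const_mul (Jr Φ α z.1 z.2)
  refine h4.congr_fderiv ?_
  ext v <;> simp [kern', lin_apply] <;> ring

lemma kern'_bound (α : Ix) {p : ℝ × Pt} {ε : ℝ} (hε : 0 < ε) (hp : ε < p.1 - ‖p.2‖) (z : ℝ × Sph) :
    ‖kern' Φ α p z‖ ≤ |jj Φ z.1 z.2| * ((ε ^ 2)⁻¹ * 2) := by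
  have h2 := inner_sph_le p.2 z.2
  have hl : ‖lin (z.2 : Pt)‖ ≤ 2 := by
    refine ContinuousLinearMap.opNorm_le_bound _ (by norm_num) fun v => ?_
    rw [lin_apply]
    have h3 := abs_real_inner_le_norm (z.2 : Pt) v.2
    rw [show ‖(z.2 : Pt)‖ = 1 from sph_rad z.2, one_mul] at h3
    have h4 := norm_fst_le v
    have h5 := norm_snd_le v
    refine (norm_sub_le _ _).trans ?_
    rw [Real.norm_eq_abs ⟪_, _⟫]
    linarith
  have h6 : ((p.1 - ⟪p.2, (z.2 : Pt)⟫) ^ 2)⁻¹ ≤ (ε ^ 2)⁻¹ := by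
    gcongr; linarith
  rw [kern', norm_smul, norm_mul, norm_neg, Real.norm_eq_abs, mul_assoc,
    Real.norm_of_nonneg (by positivity)]
  exact mul_le_mul (Jr_abs α z.1 z.2) (mul_le_mul h6 hl (norm_nonneg _) (by positivity))
    (by positivity) (abs_nonneg _)

lemma kern'_cont (h : Smooth2 Φ) (α : Ix) {p : ℝ × Pt} (hp : ‖p.2‖ < p.1) :
    Continuous (kern' Φ α p) := by
  have h1 : Continuous (fun z : ℝ × Sph => Jr Φ α z.1 z.2) :=
    ((Llow_cont α).comp (by fun_prop : Continuous (fun z : ℝ × Sph => (z.2 : Pt)))).mul (jz_cont h)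
  have h2 : Continuous (fun z : ℝ × Sph => ((p.1 - ⟪p.2, (z.2 : Pt)⟫) ^ 2)⁻¹) := by
    refine Continuous.inv₀ (by fun_prop) fun z => ?_
    have := inner_sph_le p.2 z.2
    have : 0 < p.1 - ⟪p.2, (z.2 : Pt)⟫ := by linarith
    positivity
  have h3 : Continuous (fun z : ℝ × Sph => lin (z.2 : Pt)) := by
    refine continuous_const.sub (Continuous.clm_comp ?_ continuous_const)
    exact (innerSL ℝ).continuous.comp (by fun_prop)
  exact (h1.neg.mul h2).smul h3

lemma kern'_int (hγ : 1 / 2 < γ) (h : Smooth2 Φ) (hB : RadBound 3 γ M Φ) (α : Ix) {p : ℝ × Pt}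
    (hp : ‖p.2‖ < p.1) : Integrable (kern' Φ α p) mu := by
  refine ((jz_int hγ h hB).abs.mul_const ((((p.1 - ‖p.2‖) / 2) ^ 2)⁻¹ * 2)).mono'
    (kern'_cont h α hp).aestronglyMeasurable (ae_of_all _ fun z => ?_)
  exact kern'_bound α (by linarith) (by linarith) z

lemma Sf_hasD (hγ : 1 / 2 < γ) (h : Smooth2 Φ) (hB : RadBound 3 γ M Φ) (α : Ix) {p₀ : ℝ × Pt}
    (hp : ‖p₀.2‖ < p₀.1) : HasFDerivAt (Sf Φ α) (∫ z, kern' Φ α p₀ z ∂mu) p₀ := by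
  set ε := (p₀.1 - ‖p₀.2‖) / 2 with hε
  have hεp : 0 < ε := by linarith
  have hs : {p : ℝ × Pt | ε < p.1 - ‖p.2‖} ∈ 𝓝 p₀ :=
    (isOpen_lt continuous_const (by fun_prop)).mem_nhds
      (show ε < p₀.1 - ‖p₀.2‖ by linarith)
  have hlt : ∀ p ∈ {p : ℝ × Pt | ε < p.1 - ‖p.2‖}, ‖p.2‖ < p.1 := by
    intro p hp'
    have : ε < p.1 - ‖p.2‖ := hp'
    linarith
  have key : HasFDerivAt (fun p => ∫ z, kern Φ α p z ∂mu) (∫ z, kern' Φ α p₀ z ∂mu) p₀ := by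
    refine hasFDerivAt_integral_of_dominated_of_fderiv_le
      (bound := fun z => |jj Φ z.1 z.2| * ((ε ^ 2)⁻¹ * 2)) hs ?_ ?_ ?_ ?_ ?_ ?_
    · filter_upwards [hs] with p hp'
      exact (kern_cont h α (hlt p hp')).aestronglyMeasurable
    · exact kern_int hγ h hB α hp
    · exact (kern'_cont h α hp).aestronglyMeasurable
    · exact ae_of_all _ fun z p hp' => kern'_bound α hεp hp' z
    · exact (jz_int hγ h hB).abs.mul_const _
    · exact ae_of_all _ fun z p hp' => kern_hasD α (hlt p hp') z
  refine key.congr_of_eventuallyEq ?_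
  filter_upwards [hs] with p hp'
  exact Sf_eq hγ h hB α (hlt p hp')

lemma Sf_div (hγ : 1 / 2 < γ) (h : Smooth2 Φ) (hB : RadBound 3 γ M Φ) {p : ℝ × Pt}
    (hp : ‖p.2‖ < p.1) :
    - (∫ z, kern' Φ none p z ∂mu) (1, 0)
      + ∑ i, (∫ z, kern' Φ (some i) p z ∂mu) (0, EuclideanSpace.single i 1) = 0 := by
  have hi := fun α => kern'_int hγ h hB α hp
  have e : ∀ α v, (∫ z, kern' Φ α p z ∂mu) v = ∫ z, kern' Φ α p z v ∂mu :=
    fun α v => ContinuousLinearMap.integral_apply (hi α) v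
  have hi' : ∀ α v, Integrable (fun z => kern' Φ α p z v) mu :=
    fun α v => (hi α).apply_continuousLinearMap v
  simp only [e]
  have hneg : Integrable (fun z => - kern' Φ none p z (1, 0)) mu := (hi' _ _).neg
  rw [← integral_finsetSum _ (fun i _ => hi' _ _), ← integral_neg,
    ← integral_add hneg (integrable_finsetSum _ (fun i _ => hi' _ _))]
  rw [← integral_zero (ℝ × Sph) ℝ (μ := mu)]
  congr 1
  funext z
  have hs := sum_sq_of_rad (sph_rad z.2)
  simp [kern', lin_apply, Fin.sum_univ_three, Jr_eq, Llow, EuclideanSpace.inner_single_right]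
  linear_combination (jj Φ z.1 z.2 * ((p.1 - ⟪p.2, (z.2 : Pt)⟫) ^ 2)⁻¹) * hs

lemma Sf_lim (hγ : 1 / 2 < γ) (h : Smooth2 Φ) (hB : RadBound 3 γ M Φ) {q : ℝ} (hq : q < 0)
    {ω : Pt} (hω : rad ω = 1) :
    Tendsto (fun r : ℝ => r * (Sf Φ none (r - q, r • ω) + ∑ i, ω i * Sf Φ (some i) (r - q, r • ω)))
      atTop (𝓝 (charge Φ)) := by
  let F : ℝ → ℝ × Sph → ℝ := fun r z =>
    jj Φ z.1 z.2 * ((⟪ω, (z.2 : Pt)⟫ - 1) / ((1 - ⟪ω, (z.2 : Pt)⟫) - q / r))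
  have hle : ∀ z : ℝ × Sph, ⟪ω, (z.2 : Pt)⟫ ≤ 1 := fun z =>
    (inner_sph_le ω z.2).trans (show ‖ω‖ = 1 from hω).le
  have hF : ∀ r : ℝ, 0 < r →
      r * (Sf Φ none (r - q, r • ω) + ∑ i, ω i * Sf Φ (some i) (r - q, r • ω)) = ∫ z, F r z ∂mu := by
    intro r hr
    have hp : ‖((r - q, r • ω) : ℝ × Pt).2‖ < ((r - q, r • ω) : ℝ × Pt).1 := by
      have := rad_smul hr hω
      simp only
      rw [show ‖r • ω‖ = r from this]; linarith
    have hi := fun α => kern_int hγ h hB α hp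
    simp only [Sf_eq hγ h hB _ hp, ← integral_const_mul]
    rw [← integral_finsetSum _ (fun i _ => (hi _).const_mul _),
      ← integral_add (hi _) (integrable_finsetSum _ (fun i _ => (hi _).const_mul _)),
      ← integral_const_mul]
    congr 1
    funext z
    have h1 := hle z
    have h2 : 0 < r * (1 - ⟪ω, (z.2 : Pt)⟫) - q := by nlinarith
    have h3 : (1 - ⟪ω, (z.2 : Pt)⟫) - q / r = (r * (1 - ⟪ω, (z.2 : Pt)⟫) - q) / r := by
      field_simp
    have h4 : r - q - r * ⟪ω, (z.2 : Pt)⟫ = r * (1 - ⟪ω, (z.2 : Pt)⟫) - q := by ring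
    simp only [kern, F, h3, inner_smul_left, Jr_eq, Llow, Fin.sum_univ_three]
    simp only [conj_trivial, h4]
    have h5 := inner_eq3 ω z.2
    generalize r * (1 - ⟪ω, (z.2 : Pt)⟫) - q = d at *
    rw [h5]
    field_simp
    ring
  have hlim : Tendsto (fun r => ∫ z, F r z ∂mu) atTop (𝓝 (∫ z : ℝ × Sph, - jj Φ z.1 z.2 ∂mu)) := by
    refine tendsto_integral_filter_of_dominated_convergence (fun z => |jj Φ z.1 z.2|) ?_ ?_
      (jz_int hγ h hB).abs ?_
    · filter_upwards [eventually_gt_atTop 0] with r hr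
      refine (Continuous.mul (jz_cont h) (Continuous.div (by fun_prop) (by fun_prop) ?_)).aestronglyMeasurable
      intro z
      have h1 := hle z
      have : q / r < 0 := div_neg_of_neg_of_pos hq hr
      linarith
    · filter_upwards [eventually_gt_atTop 0] with r hr
      refine ae_of_all _ fun z => ?_
      have h1 := hle z
      have : q / r < 0 := div_neg_of_neg_of_pos hq hr
      simp only [F]
      rw [norm_mul, Real.norm_eq_abs, norm_div, Real.norm_of_nonpos (by linarith),
        Real.norm_of_nonneg (by linarith)]
      refine mul_le_of_le_one_right (abs_nonneg _) ?_
      rw [div_le_one (by linarith)]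
      linarith
    · filter_upwards [ae_ne ⟨ω, by simpa [rad] using hω⟩] with z hz
      have hz' : ⟪ω, (z.2 : Pt)⟫ < 1 := by
        rw [inner_lt_one_iff_real_of_norm_eq_one hω (sph_rad z.2)]
        intro he
        exact hz (Subtype.ext he.symm)
      have h0 : Tendsto (fun r : ℝ => q / r) atTop (𝓝 0) := tendsto_const_nhds.div_atTop tendsto_id
      have h1 := (tendsto_const_nhds (x := (⟪ω, (z.2 : Pt)⟫ - 1))).div
        ((tendsto_const_nhds (x := (1 - ⟪ω, (z.2 : Pt)⟫))).sub h0) (by linarith)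
      have h2 := h1.const_mul (jj Φ z.1 z.2)
      have hne : (1 - ⟪ω, (z.2 : Pt)⟫) ≠ 0 := by linarith
      have e : - jj Φ z.1 z.2
          = jj Φ z.1 z.2 * ((⟪ω, (z.2 : Pt)⟫ - 1) / (1 - ⟪ω, (z.2 : Pt)⟫ - 0)) := by
        rw [sub_zero, ← neg_sub, neg_div, div_self hne]; ring
      rw [e]; exact h2
  rw [charge_eq hγ h hB]
  refine hlim.congr' ?_
  filter_upwards [eventually_gt_atTop 0] with r hr
  exact (hF r hr).symm

/-- the interior retarded part -/
def B1 (χin : ℝ → ℝ) (Φ : ℝ → Pt → ℂ) (α : Ix) (p : ℝ × Pt) : ℝ :=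
  (1 / (4 * π)) * Sf Φ α p * χin (rad p.2 - p.1)

variable {χin : ℝ → ℝ}

lemma B1_hasD (hγ : 1 / 2 < γ) (h : Smooth2 Φ) (hB : RadBound 3 γ M Φ)
    (hχ : ContDiff ℝ (⊤ : ℕ∞) χin) (α : Ix) {p : ℝ × Pt} (hx : p.2 ≠ 0) (hp : ‖p.2‖ < p.1) :
    HasFDerivAt (B1 χin Φ α)
      (((1 / (4 * π)) * Sf Φ α p) • (deriv χin (rad p.2 - p.1) •
          ((‖p.2‖⁻¹ • innerSL ℝ p.2).comp (ContinuousLinearMap.snd ℝ ℝ Pt)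
            - ContinuousLinearMap.fst ℝ ℝ Pt))
        + χin (rad p.2 - p.1) • ((1 / (4 * π)) • ∫ z, kern' Φ α p z ∂mu)) p := by
  have h1 : HasDerivAt χin (deriv χin (rad p.2 - p.1)) (rad p.2 - p.1) :=
    (hχ.differentiable (by simp) _).hasDerivAt
  have h2 := h1.comp_hasFDerivAt p (diff_radsub hx)
  exact ((Sf_hasD hγ h hB α hp).const_mul (1 / (4 * π))).mul h2

lemma B1_zero (hχ0 : ∀ s : ℝ, -(1 / 2) ≤ s → χin s = 0) (α : Ix) {p : ℝ × Pt}
    (hp : -(1 / 2) < rad p.2 - p.1) : B1 χin Φ α =ᶠ[𝓝 p] fun _ => 0 := by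
  have : ∀ᶠ p' : ℝ × Pt in 𝓝 p, -(1 / 2) < rad p'.2 - p'.1 := by
    unfold rad at hp ⊢
    exact (isOpen_lt continuous_const (by fun_prop)).mem_nhds hp
  filter_upwards [this] with p' hp'
  simp [B1, hχ0 _ hp'.le]

lemma B1_main (hγ : 1 / 2 < γ) (h : Smooth2 Φ) (hB : RadBound 3 γ M Φ)
    (hχ : ContDiff ℝ (⊤ : ℕ∞) χin) (hχ0 : ∀ s : ℝ, -(1 / 2) ≤ s → χin s = 0)
    (q : ℝ) {ω : Pt} (hω : rad ω = 1) :
    (∀ r : ℝ, 0 < r → ∀ α, DifferentiableAt ℝ (B1 χin Φ α) (r - q, r • ω)) ∧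
    Tendsto (fun r : ℝ => r * divU (B1 χin Φ) (r - q, r • ω)) atTop
      (𝓝 (charge Φ / (4 * π) * deriv χin q)) := by
  rcases lt_or_ge q 0 with hq | hq
  · have hp : ∀ r : ℝ, 0 < r → ‖((r - q, r • ω) : ℝ × Pt).2‖ < ((r - q, r • ω) : ℝ × Pt).1 := by
      intro r hr
      have := rad_smul hr hω
      simp only
      rw [show ‖r • ω‖ = r from this]; linarith
    refine ⟨fun r hr α => (B1_hasD hγ h hB hχ α (smul_ne hr hω) (hp r hr)).differentiableAt, ?_⟩
    have h1 := (Sf_lim hγ h hB hq hω).const_mul ((1 / (4 * π)) * deriv χin q)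
    have e : (1 / (4 * π)) * deriv χin q * charge Φ = charge Φ / (4 * π) * deriv χin q := by ring
    rw [e] at h1
    refine h1.congr' ?_
    filter_upwards [eventually_gt_atTop 0] with r hr
    have e1 : r - (r - q) = q := by ring
    have hn : ‖r • ω‖ = r := rad_smul hr hω
    rw [divU_eq (fun α => B1_hasD hγ h hB hχ α (smul_ne hr hω) (hp r hr))]
    have hd := Sf_div hγ h hB (hp r hr)
    have hin : ∀ i, (innerSL ℝ (r • ω)) (EuclideanSpace.single i 1) = r * ω i := by
      intro i
      simp [EuclideanSpace.inner_single_right]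
    simp only [add_apply, smul_apply, ContinuousLinearMap.comp_apply, ContinuousLinearMap.coe_snd',
      sub_apply, ContinuousLinearMap.coe_fst', map_zero, zero_sub, smul_eq_mul, sub_zero,
      rad_smul hr hω, e1, hn, hin, inv_mul_cancel_left₀ hr.ne']
    rw [Fin.sum_univ_three] at hd ⊢
    rw [Fin.sum_univ_three]
    linear_combination (-(r * χin q * (1 / (4 * π)))) * hd
  · have hz : ∀ r : ℝ, 0 < r → ∀ α, B1 χin Φ α =ᶠ[𝓝 (r - q, r • ω)] fun _ => 0 := by
      intro r hr α
      refine B1_zero hχ0 α ?_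
      simp only [rad_smul hr hω]; linarith
    refine ⟨fun r hr α => (differentiableAt_const (0 : ℝ)).congr_of_eventuallyEq (hz r hr α), ?_⟩
    have hd : deriv χin q = 0 := by
      have : χin =ᶠ[𝓝 q] fun _ => 0 := by
        filter_upwards [eventually_gt_nhds (show -(1 / 2) < q by linarith)] with s hs
        exact hχ0 s hs.le
      rw [this.deriv_eq]; simp
    rw [hd, mul_zero]
    refine tendsto_const_nhds.congr' ?_
    filter_upwards [eventually_gt_atTop 0] with r hr
    unfold divU
    simp only [(hz r hr _).fderiv_eq]
    simp
end S

lemma Aasy_split (χin χex : ℝ → ℝ) (Φ : ℝ → Pt → ℂ) (𝒜 : Ix → ℝ → Pt → ℝ) (α : Ix) :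
    (fun p : ℝ × Pt => Aasy χin χex Φ 𝒜 α p.1 p.2)
      = fun p => B1 χin Φ α p + B2 χin Φ α p + B3 𝒜 α p + B4 χex (charge Φ) α p := by
  funext p
  simp only [Aasy, B1, B2, B3, B4, Gf, nrm, Sf]
  have e1 : ∀ s : Set ℝ, (∫ η in s, Jr Φ α η ((rad p.2)⁻¹ • p.2))
      = Llow α ((rad p.2)⁻¹ • p.2) * ∫ η in s, jj Φ η ((rad p.2)⁻¹ • p.2) := by
    intro s
    rw [← integral_const_mul]; rfl
  rw [e1, e1]
  ring

/-- Proposition 3.6, the asymptotic Lorenz gauge condition forces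
the ODE `∂_q(L^α𝒜_α + (𝐪/4π)χ_in + (𝐪/4π)χ_ex) = 0`. -/
theorem stmt13 (γ : ℝ) (hγ : 1 / 2 < γ) (hγ1 : γ < 1)
    (χin χex : ℝ → ℝ)
    (hχin : ContDiff ℝ (⊤ : ℕ∞) χin) (hχin1 : ∀ s : ℝ, s ≤ -1 → χin s = 1)
    (hχin0 : ∀ s : ℝ, -(1 / 2) ≤ s → χin s = 0)
    (hχex : ContDiff ℝ (⊤ : ℕ∞) χex) (hχex1 : ∀ s : ℝ, 1 ≤ s → χex s = 1)
    (hχex0 : ∀ s : ℝ, s ≤ 1 / 2 → χex s = 0)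
    (Φ : ℝ → Pt → ℂ) (𝒜 : Ix → ℝ → Pt → ℝ)
    (hΦ : Smooth2 Φ) (h𝒜 : ∀ α, Smooth2 (fun q ω => ((𝒜 α q ω : ℝ) : ℂ)))
    (hfin : ∃ M : ℝ, RadBound 3 γ M Φ ∧
      ∀ α, RadBound 3 γ M (fun q ω => ((𝒜 α q ω : ℝ) : ℂ)))
    (hLorenz : ∀ (q : ℝ) (ω : Pt), rad ω = 1 →
      ∃ c R : ℝ, ∀ r : ℝ, R ≤ r →
        |divA (Aasy χin χex Φ 𝒜) (r - q) (r • ω)| ≤ c * Real.log r / r ^ 2) :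
    ∀ (q : ℝ) (ω : Pt), rad ω = 1 →
      deriv (fun s => 𝒜 none s ω + (∑ i, ω i * 𝒜 (some i) s ω)
        + (charge Φ / (4 * π)) * χin s + (charge Φ / (4 * π)) * χex s) q = 0 := by
  intro q ω hω
  obtain ⟨M, hB, _⟩ := hfin
  have hsplit := Aasy_split χin χex Φ 𝒜
  obtain ⟨d1, l1⟩ := B1_main hγ hΦ hB hχin hχin0 q hω
  have l2 := B2_lim hγ hΦ hB hχin q hω
  have l3 := B3_lim h𝒜 q hω
  have l4 := B4_lim hχex (charge Φ) q hω
  have hsum := ((l1.add l2).add l3).add l4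
  have hdiv : ∀ r : ℝ, 0 < r → divA (Aasy χin χex Φ 𝒜) (r - q) (r • ω)
      = divU (B1 χin Φ) (r - q, r • ω) + divU (B2 χin Φ) (r - q, r • ω)
        + divU (B3 𝒜) (r - q, r • ω) + divU (B4 χex (charge Φ)) (r - q, r • ω) := by
    intro r hr
    have hx : ((r - q, r • ω) : ℝ × Pt).2 ≠ 0 := smul_ne hr hω
    have e1 := d1 r hr
    have e2 := fun α => B2_hasD hγ hΦ hB hχin hx α
    have e3 := fun α => (B3_hasD h𝒜 hx α).differentiableAt
    have e4 := fun α => B4_diff hχex (charge Φ) hx α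
    have e12 := fun α => (e1 α).add (e2 α)
    have e123 := fun α => (e12 α).add (e3 α)
    have e1234 := fun α => (e123 α).add (e4 α)
    rw [divA_eq (fun α => by rw [hsplit α]; exact e1234 α)]
    have : (fun α (p : ℝ × Pt) => Aasy χin χex Φ 𝒜 α p.1 p.2)
        = fun α p => B1 χin Φ α p + B2 χin Φ α p + B3 𝒜 α p + B4 χex (charge Φ) α p := by
      funext α; exact hsplit α
    rw [this]
    rw [divU_add (B := fun α p => B1 χin Φ α p + B2 χin Φ α p + B3 𝒜 α p) e123 e4,
      divU_add (B := fun α p => B1 χin Φ α p + B2 χin Φ α p) e12 e3, divU_add e1 e2]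
  obtain ⟨c, R, hc⟩ := hLorenz q ω hω
  have hzero : Tendsto (fun r : ℝ => r * divA (Aasy χin χex Φ 𝒜) (r - q) (r • ω)) atTop (𝓝 0) := by
    have hlog : Tendsto (fun r : ℝ => c * (Real.log r / r)) atTop (𝓝 0) := by
      simpa using (Real.isLittleO_log_id_atTop.tendsto_div_nhds_zero).const_mul c
    refine squeeze_zero_norm' ?_ hlog
    filter_upwards [eventually_ge_atTop R, eventually_gt_atTop 0] with r hR hr
    rw [norm_mul, Real.norm_of_nonneg hr.le, Real.norm_eq_abs]
    calc r * |divA (Aasy χin χex Φ 𝒜) (r - q) (r • ω)| ≤ r * (c * Real.log r / r ^ 2) :=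
          mul_le_mul_of_nonneg_left (hc r hR) hr.le
      _ = c * (Real.log r / r) := by field_simp
  have hzero' := hzero.congr' (show _ =ᶠ[atTop] (fun r : ℝ =>
      r * divU (B1 χin Φ) (r - q, r • ω) + r * divU (B2 χin Φ) (r - q, r • ω)
        + r * divU (B3 𝒜) (r - q, r • ω) + r * divU (B4 χex (charge Φ)) (r - q, r • ω)) by
    filter_upwards [eventually_gt_atTop 0] with r hr
    rw [hdiv r hr]; ring)
  have hfinal := tendsto_nhds_unique hsum hzero'
  have a0 := (A_deriv h𝒜 none q ω).differentiableAt.hasDerivAt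
  have ai := fun i => (A_deriv h𝒜 (some i) q ω).differentiableAt.hasDerivAt
  have c1 : HasDerivAt χin (deriv χin q) q := (hχin.differentiable (by simp) _).hasDerivAt
  have c2 : HasDerivAt χex (deriv χex q) q := (hχex.differentiable (by simp) _).hasDerivAt
  have hs : HasDerivAt (fun s => ∑ i, ω i * 𝒜 (some i) s ω)
      (∑ i, ω i * deriv (fun s => 𝒜 (some i) s ω) q) q :=
    HasDerivAt.fun_sum fun i _ => (ai i).const_mul (ω i)
  have := ((a0.add hs).add (c1.const_mul (charge Φ / (4 * π)))).add
    (c2.const_mul (charge Φ / (4 * π)))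
  refine this.deriv.trans ?_
  linarith
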